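/- arXiv:1003.0689 — 2 statements merged into one kernel-verified Lean document; each statement's English description precedes it below -/
import Mathlib

section
/- Let K_− denote the Clifford–Fourier kernel for even m given by its closed form. (i) If m = 2, then for all x, y, z ∈ ℝ²: K_−(x,z) K_−(y,z) = K_−(x+y,z) in Cl_{0,2}. (ii) If m > 2 is even, then there exist x, y, z ∈ ℝ^m with K_−(x,z) K_−(y,z) ≠ K_−(x+y,z). -/
open scoped BigOperators
open MeasureTheory

noncomputable section

namespace CliffordFourier

/-- Concrete model of the complexified Clifford algebra `Cl_{0,m} ⊗ ℂ`:
an element is the family of its complex coefficients on the canonical basis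
`e_S = e_{i₁} ⋯ e_{i_k}` (for `S = {i₁ < … < i_k} ⊆ {0,…,m-1}`). -/
def Cl (m : ℕ) : Type := Finset (Fin m) → ℂ

variable {m : ℕ}

instance : NormedAddCommGroup (Cl m) :=
  inferInstanceAs (NormedAddCommGroup (Finset (Fin m) → ℂ))
instance : NormedSpace ℝ (Cl m) :=
  inferInstanceAs (NormedSpace ℝ (Finset (Fin m) → ℂ))
instance : Module ℂ (Cl m) := inferInstanceAs (Module ℂ (Finset (Fin m) → ℂ))
instance : CompleteSpace (Cl m) := inferInstanceAs (CompleteSpace (Finset (Fin m) → ℂ))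

/-- The coefficient of `a` on the basis element `e_S`. -/
def coeff (a : Cl m) : Finset (Fin m) → ℂ := a

/-- Build an element of the Clifford algebra from its coefficients. -/
def ofCoeff (f : Finset (Fin m) → ℂ) : Cl m := f

/-- `1 = e_∅`. -/
instance : One (Cl m) := ⟨ofCoeff fun S => if S = (∅ : Finset (Fin m)) then 1 else 0⟩

/-- Clifford multiplication, determined by the relations `e_i e_j = - e_j e_i` (`i ≠ j`)
and `e_i² = -1`; on basis elements it is given by
`e_T · e_U = (-1)^{#{(t,u) ∈ T×U : u < t}} · (-1)^{#(T∩U)} · e_{T Δ U}`. -/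
instance : Mul (Cl m) :=
  ⟨fun a b => ofCoeff fun S => ∑ T : Finset (Fin m),
    ((-1 : ℂ) ^ ((((T ×ˢ (symmDiff T S)).filter fun p : Fin m × Fin m => p.2 < p.1).card)
        + (T ∩ (symmDiff T S)).card))
      * coeff a T * coeff b (symmDiff T S)⟩

/-- The generator `e_i`. -/
def e (m : ℕ) (i : Fin m) : Cl m := ofCoeff fun S => if S = {i} then 1 else 0

/-- The embedding of a vector `x ∈ ℝ^m` as `x = Σ_i x_i e_i` in the Clifford algebra. -/
def vec (m : ℕ) (x : Fin m → ℝ) : Cl m := ∑ i : Fin m, (x i : ℂ) • e m i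

/-- The Euclidean inner product `⟨x,y⟩ = Σ_i x_i y_i`. -/
def ip (x y : Fin m → ℝ) : ℝ := ∑ i, x i * y i

/-- The Euclidean norm `|x|`. -/
def nrm (x : Fin m → ℝ) : ℝ := Real.sqrt (ip x x)

/-- The wedge product `x∧y = Σ_{j<k} e_j e_k (x_j y_k - x_k y_j)`. -/
def wedge (m : ℕ) (x y : Fin m → ℝ) : Cl m :=
  ∑ j : Fin m, ∑ k : Fin m,
    if j < k then ((x j * y k - x k * y j : ℝ) : ℂ) • (e m j * e m k) else 0

/-- Complex conjugation of the coefficients. -/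
def cconj (a : Cl m) : Cl m := ofCoeff fun S => starRingEnd ℂ (coeff a S)

/-- The entire function `J̃_a(t) = t^{-a} J_a(t) = Σ_{j≥0} (-1)^j (t/2)^{2j} / (j! Γ(j+a+1) 2^a)`
(for `t > 0` this is literally `t^{-a} J_a(t)`). -/
def besselJt (a t : ℝ) : ℝ :=
  ∑' j : ℕ, ((-1 : ℝ)^j * (t/2) ^ (2*j)) / (j.factorial * Real.Gamma ((j : ℝ) + a + 1) * (2:ℝ)^a)

/-- `A*_{(m-2)/2}(s,t) = Σ_{ℓ=0}^{⌊m/4-3/4⌋} s^{m/2-2-2ℓ} (1/(2^ℓ ℓ!)) Γ(m/2)/Γ(m/2-2ℓ-1) J̃_{(m-2ℓ-3)/2}(t)`. -/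
def Astar (m : ℕ) (s t : ℝ) : ℝ :=
  ∑ l ∈ Finset.range ((m - 3)/4 + 1),
    s ^ (m/2 - 2 - 2*l) * (1 / ((2:ℝ)^l * (l.factorial : ℝ))) *
      (Real.Gamma ((m:ℝ)/2) / Real.Gamma ((m:ℝ)/2 - 2*l - 1)) *
        besselJt (((m:ℝ) - 2*l - 3)/2) t

/-- `B*_{(m-2)/2}(s,t) = -Σ_{ℓ=0}^{⌊m/4-1/2⌋} s^{m/2-1-2ℓ} (1/(2^ℓ ℓ!)) Γ(m/2)/Γ(m/2-2ℓ) J̃_{(m-2ℓ-3)/2}(t)`. -/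
def Bstar (m : ℕ) (s t : ℝ) : ℝ :=
  -∑ l ∈ Finset.range ((m - 2)/4 + 1),
    s ^ (m/2 - 1 - 2*l) * (1 / ((2:ℝ)^l * (l.factorial : ℝ))) *
      (Real.Gamma ((m:ℝ)/2) / Real.Gamma ((m:ℝ)/2 - 2*l)) *
        besselJt (((m:ℝ) - 2*l - 3)/2) t

/-- `C*_{(m-2)/2}(s,t) = -Σ_{ℓ=0}^{⌊m/4-1/2⌋} s^{m/2-1-2ℓ} (1/(2^ℓ ℓ!)) Γ(m/2)/Γ(m/2-2ℓ) J̃_{(m-2ℓ-1)/2}(t)`. -/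
def Cstar (m : ℕ) (s t : ℝ) : ℝ :=
  -∑ l ∈ Finset.range ((m - 2)/4 + 1),
    s ^ (m/2 - 1 - 2*l) * (1 / ((2:ℝ)^l * (l.factorial : ℝ))) *
      (Real.Gamma ((m:ℝ)/2) / Real.Gamma ((m:ℝ)/2 - 2*l)) *
        besselJt (((m:ℝ) - 2*l - 1)/2) t

/-- The closed form of the Clifford-Fourier kernel in dimension 2:
`K_-(x,y) = cos(x₁y₂ - x₂y₁) + e₁e₂ sin(x₁y₂ - x₂y₁)`. -/
def K2 (x y : Fin 2 → ℝ) : Cl 2 :=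
  Real.cos (x 0 * y 1 - x 1 * y 0) • (1 : Cl 2)
    + Real.sin (x 0 * y 1 - x 1 * y 0) • (e 2 0 * e 2 1)

/-- The closed form of the Clifford-Fourier kernel for even `m > 2`:
`K_-(x,y) = (-1)^{m/2} (π/2)^{1/2} ( A*(s,t) + B*(s,t) + (x∧y) C*(s,t) )`
with `s = ⟨x,y⟩` and `t = √(|x|²|y|² - s²)`. -/
def Kcl (m : ℕ) (x y : Fin m → ℝ) : Cl m :=
  ((-1 : ℝ)^(m/2) * Real.sqrt (Real.pi/2)) •
    ((Astar m (ip x y) (Real.sqrt (ip x x * ip y y - ip x y^2))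
        + Bstar m (ip x y) (Real.sqrt (ip x x * ip y y - ip x y^2))) • (1 : Cl m)
      + Cstar m (ip x y) (Real.sqrt (ip x x * ip y y - ip x y^2)) • wedge m x y)

theorem mul_apply' {m : ℕ} (a b : Cl m) (S : Finset (Fin m)) : coeff (a * b) S =
    ∑ T : Finset (Fin m),
    ((-1 : ℂ) ^ ((((T ×ˢ (symmDiff T S)).filter fun p : Fin m × Fin m => p.2 < p.1).card)
        + (T ∩ (symmDiff T S)).card))
      * coeff a T * coeff b (symmDiff T S) := rfl

theorem univ2 : (Finset.univ : Finset (Finset (Fin 2))) = {∅, {0}, {1}, {0, 1}} := by decide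

theorem sum2 (f : Finset (Fin 2) → ℂ) : ∑ T, f T = f ∅ + f {0} + f {1} + f {0, 1} := by
  rw [univ2, Finset.sum_insert (by decide), Finset.sum_insert (by decide),
    Finset.sum_insert (by decide), Finset.sum_singleton]
  ring

theorem all2 (P : Finset (Fin 2) → Prop) (h0 : P ∅) (h1 : P {0}) (h2 : P {1})
    (h3 : P {0, 1}) : ∀ S, P S := by
  intro S
  have : S ∈ (Finset.univ : Finset (Finset (Fin 2))) := Finset.mem_univ S
  rw [univ2] at this
  simp only [Finset.mem_insert, Finset.mem_singleton] at this
  rcases this with h | h | h | h <;> rw [h] <;> assumption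

theorem coeff_lin {m : ℕ} (p q : ℝ) (a b : Cl m) (S : Finset (Fin m)) :
    coeff (p • a + q • b) S = p * coeff a S + q * coeff b S := by
  show p • coeff a S + q • coeff b S = _
  simp

theorem coeff_smul' {m : ℕ} (p : ℝ) (a : Cl m) (S : Finset (Fin m)) :
    coeff (p • a) S = p * coeff a S := by
  show p • coeff a S = _
  simp

theorem coeff_one' {m : ℕ} (S : Finset (Fin m)) :
    coeff (1 : Cl m) S = if S = ∅ then 1 else 0 := rfl

theorem coeff_e' {m : ℕ} (i : Fin m) (S : Finset (Fin m)) :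
    coeff (e m i) S = if S = {i} then 1 else 0 := rfl

theorem coeff_ee (S : Finset (Fin 2)) :
    coeff (e 2 0 * e 2 1) S = if S = {0, 1} then 1 else 0 := by
  revert S
  apply all2 <;> rw [mul_apply', sum2] <;> simp only [coeff_e'] <;> simp +decide

theorem part1 (x y z : Fin 2 → ℝ) : K2 x z * K2 y z = K2 (x + y) z := by
  have key : ∀ S, coeff (K2 x z * K2 y z) S = coeff (K2 (x + y) z) S := by
    have h : (x + y) 0 * z 1 - (x + y) 1 * z 0 =
      (x 0 * z 1 - x 1 * z 0) + (y 0 * z 1 - y 1 * z 0) := by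
      simp only [Pi.add_apply]; ring
    unfold K2
    rw [h, Real.cos_add, Real.sin_add]
    apply all2 <;> rw [mul_apply', sum2] <;> simp only [coeff_lin, coeff_one', coeff_ee] <;>
      simp +decide <;> ring
  exact funext key

theorem bessel0 (a : ℝ) (ha : 0 < a) : besselJt a 0 ≠ 0 := by
  unfold besselJt
  rw [tsum_eq_single 0]
  · have := Real.Gamma_pos_of_pos (show 0 < a + 1 by linarith)
    simp
    constructor
    · positivity
    · exact this.ne'
  · intro j hj
    simp [hj]

open Polynomial in
theorem polyAB (m : ℕ) (hm : Even m) (h2 : 2 < m) : ∃ P : ℝ[X], P.coeff (m/2 - 1) ≠ 0 ∧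
    ∀ s, P.eval s = Astar m s 0 + Bstar m s 0 := by
  refine ⟨(∑ l ∈ Finset.range ((m - 3)/4 + 1),
    X ^ (m/2 - 2 - 2*l) * C ((1 / ((2:ℝ)^l * (l.factorial : ℝ))) *
      (Real.Gamma ((m:ℝ)/2) / Real.Gamma ((m:ℝ)/2 - 2*l - 1)) *
        besselJt (((m:ℝ) - 2*l - 3)/2) 0)) + -∑ l ∈ Finset.range ((m - 2)/4 + 1),
    X ^ (m/2 - 1 - 2*l) * C ((1 / ((2:ℝ)^l * (l.factorial : ℝ))) *
      (Real.Gamma ((m:ℝ)/2) / Real.Gamma ((m:ℝ)/2 - 2*l)) *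
        besselJt (((m:ℝ) - 2*l - 3)/2) 0), ?_, ?_⟩
  · obtain ⟨k, rfl⟩ := hm
    rw [coeff_add, coeff_neg, finsetSum_coeff, finsetSum_coeff, Finset.sum_eq_zero,
      Finset.sum_eq_single 0]
    · rw [coeff_mul_C, coeff_X_pow, if_pos (by omega)]
      have hk : (2:ℝ) ≤ k := by
        have : 2 ≤ k := by omega
        exact_mod_cast this
      have h1 := bessel0 (((k + k : ℕ) - 2 * (0:ℕ) - 3)/2 : ℝ) (by push_cast; linarith)
      have h3 := Real.Gamma_pos_of_pos (show 0 < (((k + k : ℕ)) / 2 : ℝ) by push_cast; linarith)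
      rw [zero_add, one_mul, neg_ne_zero]
      refine mul_ne_zero (mul_ne_zero (by positivity) ?_) h1
      simp only [Nat.cast_zero, mul_zero, sub_zero]
      exact div_ne_zero h3.ne' h3.ne'
    · intro l _ hl
      rw [coeff_mul_C, coeff_X_pow, if_neg (by omega), zero_mul]
    · intro h
      simp at h
    · intro l _
      rw [coeff_mul_C, coeff_X_pow, if_neg (by omega), zero_mul]
  · intro s
    unfold Astar Bstar
    simp only [eval_add, eval_neg, eval_finsetSum, eval_mul, eval_pow, eval_X, eval_C, mul_assoc]

theorem Kcl_line (m : ℕ) (i : Fin m) (s : ℝ) :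
    Kcl m (Pi.single i s) (Pi.single i 1) =
    (((-1 : ℝ)^(m/2) * Real.sqrt (Real.pi/2)) * (Astar m s 0 + Bstar m s 0)) • (1 : Cl m) := by
  have h1 : ∀ a b : ℝ, ip (Pi.single i a) (Pi.single i b : Fin m → ℝ) = a * b := by
    intro a b
    unfold ip
    rw [Finset.sum_eq_single i]
    · simp
    · intro j _ hj
      simp [hj]
    · simp
  have h2 : wedge m (Pi.single i s) (Pi.single i 1) = 0 := by
    unfold wedge
    apply Finset.sum_eq_zero
    intro j _
    apply Finset.sum_eq_zero
    intro k _
    split_ifs with h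
    · have : ((Pi.single i s : Fin m → ℝ) j * (Pi.single i 1 : Fin m → ℝ) k
        - (Pi.single i s : Fin m → ℝ) k * (Pi.single i 1 : Fin m → ℝ) j) = 0 := by
        simp only [Pi.single_apply]
        split_ifs <;> simp
      rw [this]
      simp
    · rfl
  unfold Kcl
  rw [h2, h1, h1, h1]
  have h3 : s * s * (1 * 1) - (s * 1) ^ 2 = 0 := by ring
  rw [h3, Real.sqrt_zero, mul_one, smul_zero, add_zero, smul_smul]

theorem coeff_mul_one (m : ℕ) (p q : ℝ) :
    coeff ((p • (1 : Cl m)) * (q • (1 : Cl m))) ∅ = ((p * q : ℝ) : ℂ) := by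
  rw [mul_apply', Finset.sum_eq_single ∅]
  · simp only [coeff_smul', coeff_one']
    simp
  · intro T _ hT
    simp only [coeff_smul', coeff_one', if_neg hT]
    simp
  · simp

open Polynomial in
theorem part2 (m : ℕ) (hm : Even m) (h2 : 2 < m) :
    ∃ x y z : Fin m → ℝ, Kcl m x z * Kcl m y z ≠ Kcl m (x + y) z := by
  by_contra! hc
  obtain ⟨P, hP, hPe⟩ := polyAB m hm h2
  set c : ℝ := (-1 : ℝ)^(m/2) * Real.sqrt (Real.pi/2) with hcdef
  have hc0 : c ≠ 0 := by
    have := Real.pi_pos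
    have h : Real.sqrt (Real.pi/2) ≠ 0 := by positivity
    exact mul_ne_zero (pow_ne_zero _ (by norm_num)) h
  let i : Fin m := ⟨0, by omega⟩
  have heq : (C c * P) * (C c * P) = (C c * P).comp (C 2 * X) := by
    apply Polynomial.funext
    intro s
    have h := congrArg (fun a => coeff a ∅) (hc (Pi.single i s) (Pi.single i s) (Pi.single i 1))
    simp only [← Pi.single_add, Kcl_line, coeff_mul_one, ← hcdef, ← hPe] at h
    rw [coeff_smul', coeff_one', if_pos rfl, mul_one] at h
    have h' := Complex.ofReal_injective h
    simp only [eval_mul, eval_comp, eval_C, eval_X, two_mul]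
    exact h'
  have hd := congrArg natDegree heq
  rw [natDegree_comp, natDegree_C_mul_X _ (by norm_num), mul_one] at hd
  have hne : C c * P ≠ 0 := by
    refine mul_ne_zero (C_ne_zero.2 hc0) ?_
    rintro rfl
    simp at hP
  rw [natDegree_mul hne hne, natDegree_C_mul hc0] at hd
  have := le_natDegree_of_ne_zero hP
  obtain ⟨k, hk⟩ := hm
  omega

/-- In dimension `m = 2` the Clifford-Fourier kernel satisfies
`K_-(x,z) K_-(y,z) = K_-(x+y,z)`, while for every even dimension `m > 2` this
multiplicative property fails. -/
theorem kernel_multiplicativity :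
    (∀ x y z : Fin 2 → ℝ, K2 x z * K2 y z = K2 (x + y) z) ∧
    (∀ m : ℕ, Even m → 2 < m →
      ∃ x y z : Fin m → ℝ, Kcl m x z * Kcl m y z ≠ Kcl m (x + y) z) := by
  exact ⟨part1, part2⟩

end CliffordFourier
end
end

section
/- Let m ≥ 2 be even. Then the Clifford–Fourier transform F_−, defined by F_− f(y) = (2π)^{−m/2} ∫_{ℝ^m} K_−(x,y) f(x) dx with K_− the closed-form Clifford–Fourier kernel, is a well-defined continuous linear operator from the Schwartz space of Cl_{0,m}⊗ℂ-valued functions S(ℝ^m)⊗Cl_{0,m} to itself. -/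
open scoped BigOperators
open MeasureTheory

noncomputable section

namespace CliffordFourier

variable {m : ℕ}

/-- The closed form of the Clifford-Fourier kernel for even `m`:
for `m = 2` it is `cos(x₁y₂-x₂y₁) + e₁e₂ sin(x₁y₂-x₂y₁)`, and for even `m > 2` it is
`(-1)^{m/2} (π/2)^{1/2} (A*(s,t) + B*(s,t) + (x∧y) C*(s,t))`
with `s = ⟨x,y⟩`, `t = √(|x|²|y|² - s²)`. -/
def Kcf (m : ℕ) (x y : Fin m → ℝ) : Cl m :=
  if 2 < m then
    ((-1:ℝ)^(m/2) * Real.sqrt (Real.pi/2)) •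
      ((Astar m (ip x y) (Real.sqrt (ip x x * ip y y - ip x y^2))
          + Bstar m (ip x y) (Real.sqrt (ip x x * ip y y - ip x y^2))) • (1 : Cl m)
        + Cstar m (ip x y) (Real.sqrt (ip x x * ip y y - ip x y^2)) • wedge m x y)
  else
    (Real.cos (∑ j : Fin m, ∑ k : Fin m, if j < k then x j * y k - x k * y j else 0)) • (1 : Cl m)
      + (Real.sin (∑ j : Fin m, ∑ k : Fin m, if j < k then x j * y k - x k * y j else 0)) •
          (∑ j : Fin m, ∑ k : Fin m, if j < k then e m j * e m k else 0)

section Aux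

open Function

open Function in
theorem tg_fderiv {E F : Type*} [NormedAddCommGroup E] [NormedSpace ℝ E]
    [NormedAddCommGroup F] [NormedSpace ℝ F] {f : E → F} (hf : HasTemperateGrowth f) :
    HasTemperateGrowth (fderiv ℝ f) := by
  refine ⟨hf.1.fderiv_right (m := (⊤ : ℕ∞)) (by simp), fun n => ?_⟩
  obtain ⟨k, C, h⟩ := hf.2 (n + 1)
  exact ⟨k, C, fun x => by rw [norm_iteratedFDeriv_fderiv]; exact h x⟩

abbrev EE (m : ℕ) := (Fin m → ℝ) × (Fin m → ℝ)

/-- the `i`-th direction in `x` -/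
def dX (i : Fin m) : EE m := (Pi.single i 1, 0)
/-- the `i`-th direction in `y` -/
def dY (i : Fin m) : EE m := (0, Pi.single i 1)

/-- directional derivative -/
def Dv (v : EE m) (k : EE m → ℝ) : EE m → ℝ := fun z => fderiv ℝ k z v

def qy (z : EE m) : ℝ := ∑ i, z.2 i ^ 2

def Lop (k : EE m → ℝ) : EE m → ℝ := fun z => ∑ i, Dv (dX i) (Dv (dX i) k) z + qy z * k z

open Function

inductive Good : (EE m → ℝ) → Prop
  | zero : Good (fun _ => 0)
  | step (k : EE m → ℝ) : HasTemperateGrowth k → Good (Lop k) → Good k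

theorem tg_diff {k : EE m → ℝ} (hk : HasTemperateGrowth k) : Differentiable ℝ k :=
  hk.1.differentiable (by simp)

theorem tg_Dv {k : EE m → ℝ} (hk : HasTemperateGrowth k) (v : EE m) :
    HasTemperateGrowth (Dv v k) := by
  have h := (ContinuousLinearMap.apply ℝ ℝ v).hasTemperateGrowth.comp (tg_fderiv hk)
  exact h

theorem Dv_add {k l : EE m → ℝ} (hk : HasTemperateGrowth k) (hl : HasTemperateGrowth l)
    (v : EE m) : Dv v (fun z => k z + l z) = fun z => Dv v k z + Dv v l z := by
  funext z
  have := fderiv_add (tg_diff hk z) (tg_diff hl z)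
  simp only [Dv]
  erw [this]; rfl

theorem Dv_mul {k l : EE m → ℝ} (hk : HasTemperateGrowth k) (hl : HasTemperateGrowth l)
    (v : EE m) : Dv v (fun z => k z * l z) = fun z => k z * Dv v l z + l z * Dv v k z := by
  funext z
  simp only [Dv]
  rw [((tg_diff hk z).hasFDerivAt.fun_mul (tg_diff hl z).hasFDerivAt).fderiv]
  simp

theorem Dv_sum {ι : Type*} (s : Finset ι) {k : ι → EE m → ℝ} (hk : ∀ i, HasTemperateGrowth (k i))
    (v : EE m) : Dv v (fun z => ∑ i ∈ s, k i z) = fun z => ∑ i ∈ s, Dv v (k i) z := by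
  funext z
  simp only [Dv]
  rw [(HasFDerivAt.fun_sum (fun i _ => (tg_diff (hk i) z).hasFDerivAt)).fderiv]
  simp

theorem Dv_comm {k : EE m → ℝ} (hk : HasTemperateGrowth k) (v w : EE m) :
    Dv v (Dv w k) = Dv w (Dv v k) := by
  funext z
  have h1 := (hk.1.contDiffAt (x := z)).isSymmSndFDerivAt
    (by simp only [minSmoothness_of_isRCLikeNormedField]; 
        exact WithTop.coe_le_coe.2 (le_top (a := (2 : ℕ∞))))
  have h2 : DifferentiableAt ℝ (fderiv ℝ k) z := (tg_fderiv hk).1.differentiable (by simp) z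
  have key : ∀ a b : EE m, Dv a (Dv b k) z = fderiv ℝ (fderiv ℝ k) z a b := by
    intro a b
    have := ((ContinuousLinearMap.apply ℝ ℝ b).hasFDerivAt.comp z h2.hasFDerivAt).fderiv
    have e : Dv b k = (ContinuousLinearMap.apply ℝ ℝ b) ∘ fderiv ℝ k := rfl
    rw [e, Dv, this]; rfl
  rw [key, key]; exact h1 v w

theorem Dv_clm (L : EE m →L[ℝ] ℝ) (v : EE m) : Dv v (fun z => L z) = fun _ => L v := by
  funext z; simp [Dv]

theorem Dv_const (c : ℝ) (v : EE m) : Dv v (fun _ => c) = fun _ => 0 := by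
  funext z; simp [Dv]

def cx (i : Fin m) : EE m →L[ℝ] ℝ :=
  (ContinuousLinearMap.proj i).comp (ContinuousLinearMap.fst ℝ (Fin m → ℝ) (Fin m → ℝ))
def cy (i : Fin m) : EE m →L[ℝ] ℝ :=
  (ContinuousLinearMap.proj i).comp (ContinuousLinearMap.snd ℝ (Fin m → ℝ) (Fin m → ℝ))

@[fun_prop]
theorem tg_x (i : Fin m) : HasTemperateGrowth (fun z : EE m => z.1 i) := (cx i).hasTemperateGrowth
@[fun_prop]
theorem tg_y (i : Fin m) : HasTemperateGrowth (fun z : EE m => z.2 i) := (cy i).hasTemperateGrowth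

theorem Dv_x (i : Fin m) (v : EE m) : Dv v (fun z => z.1 i) = fun _ => v.1 i := Dv_clm (cx i) v
theorem Dv_y (i : Fin m) (v : EE m) : Dv v (fun z => z.2 i) = fun _ => v.2 i := Dv_clm (cy i) v

@[fun_prop]
theorem tg_qy : HasTemperateGrowth (qy : EE m → ℝ) := by
  unfold qy; fun_prop

theorem Dv_pow {k : EE m → ℝ} (hk : HasTemperateGrowth k) (n : ℕ) (v : EE m) :
    Dv v (fun z => k z ^ n) = fun z => n * k z ^ (n - 1) * Dv v k z := by
  funext z
  simp only [Dv]
  rw [((tg_diff hk z).hasFDerivAt.pow n).fderiv]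
  simp

theorem Dv_qy (v : EE m) : Dv v qy = fun z => ∑ i, 2 * z.2 i * v.2 i := by
  unfold qy
  rw [Dv_sum _ (fun i => by fun_prop)]
  funext z
  refine Finset.sum_congr rfl fun i _ => ?_
  rw [Dv_pow (tg_y i)]; simp [Dv_y]

theorem tg_Lop {k : EE m → ℝ} (hk : HasTemperateGrowth k) : HasTemperateGrowth (Lop k) := by
  unfold Lop
  have : ∀ i : Fin m, HasTemperateGrowth (Dv (dX i) (Dv (dX i) k)) := fun i => tg_Dv (tg_Dv hk _) _
  fun_prop

theorem Good.tg {k : EE m → ℝ} (h : Good k) : HasTemperateGrowth k := by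
  cases h with
  | zero => fun_prop
  | step k hk _ => exact hk

theorem Lop_add {k l : EE m → ℝ} (hk : HasTemperateGrowth k) (hl : HasTemperateGrowth l) :
    Lop (fun z => k z + l z) = fun z => Lop k z + Lop l z := by
  funext z
  simp only [Lop, Dv_add hk hl, Dv_add (tg_Dv hk _) (tg_Dv hl _), Finset.sum_add_distrib]
  ring

theorem Good.add {k l : EE m → ℝ} (hk : Good k) (hl : Good l) : Good (fun z => k z + l z) := by
  induction hk generalizing l with
  | zero => simpa using hl
  | step k hk h ih =>
    cases hl with
    | zero => simpa using Good.step k hk h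
    | step l hl h' =>
      refine Good.step _ (hk.fun_add hl) ?_
      rw [Lop_add hk hl]
      exact ih h'

/-- multiplication by functions independent of `x` -/
theorem Good.mul {h k : EE m → ℝ} (hk : Good k) (hh : HasTemperateGrowth h)
    (h0 : ∀ i, Dv (dX i) h = fun _ => 0) : Good (fun z => h z * k z) := by
  induction hk with
  | zero => simpa using Good.zero
  | step k hk hL ih =>
    refine Good.step _ (hh.fun_mul hk) ?_
    convert ih using 1
    funext z
    have : ∀ i, Dv (dX i) (fun z => h z * k z) = fun z => h z * Dv (dX i) k z := by
      intro i
      rw [Dv_mul hh hk, h0]; simp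
    have h2 : ∀ i, Dv (dX i) (fun z => h z * Dv (dX i) k z)
        = fun z => h z * Dv (dX i) (Dv (dX i) k) z := by
      intro i
      rw [Dv_mul hh (tg_Dv hk _), h0]; simp
    simp only [Lop, this, h2, ← Finset.mul_sum]
    ring

theorem Good.const_mul {k : EE m → ℝ} (hk : Good k) (c : ℝ) : Good (fun z => c * k z) :=
  hk.mul (h := fun _ => c) (by fun_prop) (fun i => Dv_const c _)

theorem Good.y_mul {k : EE m → ℝ} (hk : Good k) (j : Fin m) : Good (fun z => z.2 j * k z) :=
  hk.mul (h := fun z => z.2 j) (by fun_prop) (fun i => by rw [Dv_y]; rfl)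

theorem Good.qy_mul {k : EE m → ℝ} (hk : Good k) : Good (fun z => qy z * k z) :=
  hk.mul (h := qy) (by fun_prop) (fun i => by rw [Dv_qy]; simp [dX])

theorem Good.sum {ι : Type*} (s : Finset ι) {k : ι → EE m → ℝ} (hk : ∀ i ∈ s, Good (k i)) :
    Good (fun z => ∑ i ∈ s, k i z) := by
  classical
  induction s using Finset.induction_on with
  | empty => simpa using Good.zero
  | insert a s ha ih =>
    simp only [Finset.sum_insert ha]
    exact (hk a (by simp)).add (ih fun i hi => hk i (by simp [hi]))

theorem Good.dy {k : EE m → ℝ} (hk : Good k) (j : Fin m) : Good (Dv (dY j) k) := by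
  induction hk with
  | zero => rw [Dv_const]; exact Good.zero
  | step k hk hL ih =>
    refine Good.step _ (tg_Dv hk _) ?_
    have := ih.add (((Good.step k hk hL).y_mul j).const_mul (-2))
    convert this using 1
    funext z
    have e1 : Dv (dY j) (Lop k) z = ∑ i, Dv (dY j) (Dv (dX i) (Dv (dX i) k)) z
        + (qy z * Dv (dY j) k z + k z * (2 * z.2 j)) := by
      unfold Lop
      have h1 : ∀ i : Fin m, HasTemperateGrowth (Dv (dX i) (Dv (dX i) k)) :=
        fun i => tg_Dv (tg_Dv hk _) _
      rw [Dv_add (k := fun z => ∑ i, Dv (dX i) (Dv (dX i) k) z) (l := fun z => qy z * k z)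
        (by fun_prop) (by fun_prop), Dv_sum _ h1, Dv_mul (by fun_prop) hk, Dv_qy]
      simp [dY, Pi.single_apply]
    have e2 : ∀ i, Dv (dY j) (Dv (dX i) (Dv (dX i) k)) = Dv (dX i) (Dv (dX i) (Dv (dY j) k)) := by
      intro i
      rw [Dv_comm (tg_Dv hk _), Dv_comm hk]
    rw [e1]
    simp only [e2, Lop]
    ring

theorem tg_bound {G : Type*} [NormedAddCommGroup G] [NormedSpace ℝ G] {k : EE m → G}
    (hk : HasTemperateGrowth k) : ∃ (N : ℕ) (C : ℝ), 0 ≤ C ∧ ∀ x y : Fin m → ℝ,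
      ‖k (x, y)‖ ≤ C * (1 + ‖x‖) ^ N * (1 + ‖y‖) ^ N := by
  obtain ⟨N, C, hC, h⟩ := hk.norm_iteratedFDeriv_le_uniform 0
  refine ⟨N, C, hC, fun x y => ?_⟩
  have h1 := h 0 le_rfl (x, y)
  rw [norm_iteratedFDeriv_zero] at h1
  refine h1.trans ?_
  rw [mul_assoc, ← mul_pow]
  gcongr
  rw [Prod.norm_mk]
  have hx := norm_nonneg x
  have hy := norm_nonneg y
  rcases max_cases ‖x‖ ‖y‖ with ⟨e, _⟩ | ⟨e, _⟩ <;> rw [e] <;> nlinarith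

variable {F : Type} [NormedAddCommGroup F] [NormedSpace ℝ F]

theorem schwartz_weight (N : ℕ) : ∃ q : Seminorm ℝ (SchwartzMap (Fin m → ℝ) F), Continuous q ∧
    ∀ f : SchwartzMap (Fin m → ℝ) F,
      Integrable (fun x : Fin m → ℝ => (1 + ‖x‖) ^ N * ‖f x‖) ∧
      ∫ x : Fin m → ℝ, (1 + ‖x‖) ^ N * ‖f x‖ ≤ q f := by
  obtain ⟨n, h⟩ := (inferInstance : (volume : Measure (Fin m → ℝ)).HasTemperateGrowth).exists_integrable
  let M : ℕ × ℕ := (N + n, 0)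
  let q0 : Seminorm ℝ (SchwartzMap (Fin m → ℝ) F) :=
    ∑ i ∈ Finset.Iic M, schwartzSeminormFamily ℝ (Fin m → ℝ) F i
  have hq0 : Continuous q0 := Seminorm.continuous_finsetSum fun i _ =>
      (schwartz_withSeminorms ℝ (Fin m → ℝ) F).continuous_seminorm i
  let c : NNReal := ⟨(∫ x : Fin m → ℝ, (1 + ‖x‖) ^ (-(n : ℝ))) * 2 ^ (N + n), by positivity⟩
  refine ⟨c • q0, ?_, fun f => ?_⟩
  · have : ⇑(c • q0) = fun f => (c : ℝ) * q0 f := by funext f; rfl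
    rw [this]; fun_prop
  have h' : ∀ x : Fin m → ℝ, (1 + ‖x‖) ^ N * ‖f x‖ ≤ (1 + ‖x‖) ^ (-(n : ℝ)) *
      (2 ^ (N + n) * q0 f) := by
    intro x
    rw [Real.rpow_neg (by positivity), ← div_eq_inv_mul, le_div_iff₀' (by positivity),
      Real.rpow_natCast]
    have h1 := SchwartzMap.one_add_le_sup_seminorm_apply (𝕜 := ℝ) (m := M) (k := N + n) (n := 0)
      le_rfl le_rfl f x
    rw [norm_iteratedFDeriv_zero] at h1
    have h2 : (Finset.Iic M).sup (fun m => SchwartzMap.seminorm ℝ m.1 m.2) f ≤ q0 f := by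
      have := Seminorm.finset_sup_le_sum (schwartzSeminormFamily ℝ (Fin m → ℝ) F) (Finset.Iic M)
      exact this f
    calc (1 + ‖x‖) ^ n * ((1 + ‖x‖) ^ N * ‖f x‖) = (1 + ‖x‖) ^ (N + n) * ‖f x‖ := by ring
      _ ≤ _ := h1
      _ ≤ _ := by gcongr
  have hi := h.mul_const (2 ^ (N + n) * q0 f)
  have hint : Integrable (fun x : Fin m → ℝ => (1 + ‖x‖) ^ N * ‖f x‖) := by
    refine hi.mono' ?_ ?_
    · have := f.continuous
      exact Continuous.aestronglyMeasurable (by fun_prop)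
    · filter_upwards with x
      rw [Real.norm_of_nonneg (by positivity)]; exact h' x
  refine ⟨hint, (integral_mono hint hi h').trans ?_⟩
  rw [integral_mul_const]
  apply le_of_eq
  change _ = ((∫ x : Fin m → ℝ, (1 + ‖x‖) ^ (-(n : ℝ))) * 2 ^ (N + n)) * q0 f
  ring

/-- the integral operator with kernel `k` -/
def Iop (k : EE m → ℝ) (f : (Fin m → ℝ) → F) (y : Fin m → ℝ) : F := ∫ x, k (x, y) • f x

theorem Iop_integrable {k : EE m → ℝ} (hk : HasTemperateGrowth k)
    (f : SchwartzMap (Fin m → ℝ) F) (y : Fin m → ℝ) :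
    Integrable (fun x => k (x, y) • f x) := by
  obtain ⟨N, C, hC, h⟩ := tg_bound hk
  obtain ⟨q, hq, h1⟩ := schwartz_weight (m := m) (F := F) N
  refine ((h1 f).1.const_mul (C * (1 + ‖y‖) ^ N)).mono' ?_ ?_
  · have := f.continuous
    have := hk.1.continuous
    exact Continuous.aestronglyMeasurable (by fun_prop)
  · filter_upwards with x
    rw [norm_smul]
    calc _ ≤ (C * (1 + ‖x‖) ^ N * (1 + ‖y‖) ^ N) * ‖f x‖ := by gcongr; exact h x y
      _ = _ := by ring

theorem Iop_bound {k : EE m → ℝ} (hk : HasTemperateGrowth k) :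
    ∃ N : ℕ, ∃ q : Seminorm ℝ (SchwartzMap (Fin m → ℝ) F), Continuous q ∧
    ∀ (f : SchwartzMap (Fin m → ℝ) F) y, ‖Iop k f y‖ ≤ (1 + ‖y‖) ^ N * q f := by
  obtain ⟨N, C, hC, h⟩ := tg_bound hk
  obtain ⟨q, hq, h1⟩ := schwartz_weight (m := m) (F := F) N
  let c : NNReal := ⟨C, hC⟩
  refine ⟨N, c • q, ?_, fun f y => ?_⟩
  · have : ⇑(c • q) = fun f => (c : ℝ) * q f := by funext f; rfl
    rw [this]; fun_prop
  have e : (c • q) f = C * q f := rfl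
  calc ‖Iop k f y‖ ≤ ∫ x, (C * (1 + ‖y‖) ^ N) * ((1 + ‖x‖) ^ N * ‖f x‖) := by
        refine norm_integral_le_of_norm_le ((h1 f).1.const_mul _) ?_
        filter_upwards with x
        rw [norm_smul]
        calc _ ≤ (C * (1 + ‖x‖) ^ N * (1 + ‖y‖) ^ N) * ‖f x‖ := by gcongr; exact h x y
          _ = _ := by ring
    _ = (C * (1 + ‖y‖) ^ N) * ∫ x, ((1 + ‖x‖) ^ N * ‖f x‖) := by rw [integral_const_mul]
    _ ≤ (C * (1 + ‖y‖) ^ N) * q f := by gcongr; exact (h1 f).2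
    _ = _ := by rw [e]; ring

/-- `v ↦ v_i • c` -/
def Lam (i : Fin m) : F →L[ℝ] ((Fin m → ℝ) →L[ℝ] F) :=
  ContinuousLinearMap.smulRightL ℝ (Fin m → ℝ) F (ContinuousLinearMap.proj i)

theorem Iop_hasFDerivAt [CompleteSpace F] {k : EE m → ℝ} (hk : HasTemperateGrowth k)
    (f : SchwartzMap (Fin m → ℝ) F) (y : Fin m → ℝ) :
    HasFDerivAt (Iop k f) (∑ i, Lam i (Iop (Dv (dY i) k) f y)) y := by
  obtain ⟨N, C, hC, h⟩ := tg_bound (tg_fderiv hk)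
  obtain ⟨q, hq, h1⟩ := schwartz_weight (m := m) (F := F) N
  have hfc := f.continuous
  have hkc := hk.1.continuous
  have hdc := (tg_fderiv hk).1.continuous
  let inr := ContinuousLinearMap.inr ℝ (Fin m → ℝ) (Fin m → ℝ)
  have : SecondCountableTopologyEither (Fin m → ℝ) ((Fin m → ℝ) →L[ℝ] F) := ⟨Or.inl inferInstance⟩
  let F' : (Fin m → ℝ) → (Fin m → ℝ) → ((Fin m → ℝ) →L[ℝ] F) :=
    fun y x => ((fderiv ℝ k (x, y)).comp inr).smulRight (f x)
  have key := hasFDerivAt_integral_of_dominated_of_fderiv_le (μ := volume) (𝕜 := ℝ)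
    (F := fun (y x : Fin m → ℝ) => k (x, y) • f x) (F' := F') (x₀ := y)
    (bound := fun x => (C * (2 + ‖y‖) ^ N * ‖inr‖) * ((1 + ‖x‖) ^ N * ‖f x‖))
    (s := Metric.ball y 1) (Metric.ball_mem_nhds y one_pos)
    (Filter.Eventually.of_forall fun y => Continuous.aestronglyMeasurable (by fun_prop))
    (Iop_integrable hk f y)
    (by
      refine Continuous.aestronglyMeasurable ?_
      have e : F' y = fun x => ContinuousLinearMap.smulRightL ℝ (Fin m → ℝ) F
        ((fderiv ℝ k (x, y)).comp inr) (f x) := rfl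
      rw [e]; fun_prop)
    (by
      filter_upwards with x z hz
      have hz' : ‖z‖ ≤ 1 + ‖y‖ := by
        have h2 : ‖z - y‖ < 1 := by simpa [dist_eq_norm] using hz
        have h3 : ‖z‖ ≤ ‖z - y‖ + ‖y‖ := by simpa using norm_add_le (z - y) y
        linarith
      rw [ContinuousLinearMap.norm_smulRight_apply]
      calc _ ≤ (‖fderiv ℝ k (x, z)‖ * ‖inr‖) * ‖f x‖ := by
            gcongr; exact ContinuousLinearMap.opNorm_comp_le _ _
        _ ≤ ((C * (1 + ‖x‖) ^ N * (1 + ‖z‖) ^ N) * ‖inr‖) * ‖f x‖ := by gcongr; exact h x z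
        _ ≤ ((C * (1 + ‖x‖) ^ N * (2 + ‖y‖) ^ N) * ‖inr‖) * ‖f x‖ := by
            gcongr ((C * (1 + ‖x‖) ^ N * ?_ ^ N) * ‖inr‖) * ‖f x‖
            linarith
        _ = _ := by ring)
    ((h1 f).1.const_mul _)
    (by
      filter_upwards with x z hz
      have h2 : HasFDerivAt (fun z : Fin m → ℝ => ((x, z) : EE m)) inr z := by
        simpa [inr] using hasFDerivAt_prodMk_right x z
      exact ((tg_diff hk (x, z)).hasFDerivAt.comp z h2).smul_const (f x))
  suffices hs : ∑ i, Lam i (Iop (Dv (dY i) k) f y) = ∫ x, F' y x by rw [hs]; exact key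
  have e : (fun x => F' y x) = fun x => ∑ i, Lam i (Dv (dY i) k (x, y) • f x) := by
    funext x
    ext v
    have hv : inr v = ∑ i, v i • (dY i : EE m) := by
      ext j
      · simp [inr, dY, Prod.fst_sum]
      · simp [inr, dY, Prod.snd_sum, Pi.single_apply]
    simp only [F', ContinuousLinearMap.smulRight_apply, ContinuousLinearMap.comp_apply, hv,
      map_sum, map_smul, Finset.sum_smul]
    simp [Lam, Dv, smul_smul, mul_comm]
  rw [e, integral_finsetSum]
  · refine Finset.sum_congr rfl fun i _ => ?_
    rw [ContinuousLinearMap.integral_comp_comm _ (Iop_integrable (tg_Dv hk _) f y)]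
    rfl
  · intro i _
    exact ContinuousLinearMap.integrable_comp _ (Iop_integrable (tg_Dv hk _) f y)

theorem Iop_contDiff [CompleteSpace F] (n : ℕ) {k : EE m → ℝ} (hk : HasTemperateGrowth k)
    (f : SchwartzMap (Fin m → ℝ) F) : ContDiff ℝ n (Iop k f) := by
  induction n generalizing k with
  | zero =>
    have : Differentiable ℝ (Iop k f) := fun y => (Iop_hasFDerivAt hk f y).differentiableAt
    exact contDiff_zero.2 this.continuous
  | succ n ih =>
    push_cast
    refine contDiff_succ_iff_fderiv.2 ⟨fun y => (Iop_hasFDerivAt hk f y).differentiableAt,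
      by simp, ?_⟩
    have : fderiv ℝ (Iop k f) = fun y => ∑ i, Lam i (Iop (Dv (dY i) k) f y) := by
      funext y; exact (Iop_hasFDerivAt hk f y).fderiv
    rw [this]
    exact ContDiff.sum fun i _ => (Lam (F := F) i).contDiff.comp (ih (tg_Dv hk (dY i)))

/-- `f - Δ f` -/
def Rop : SchwartzMap (Fin m → ℝ) F →L[ℝ] SchwartzMap (Fin m → ℝ) F :=
  ContinuousLinearMap.id ℝ _ - ∑ i : Fin m,
    ((SchwartzMap.evalCLM ℝ (Fin m → ℝ) F (Pi.single i 1)) ∘L SchwartzMap.fderivCLM ℝ _ F) ∘L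
    ((SchwartzMap.evalCLM ℝ (Fin m → ℝ) F (Pi.single i 1)) ∘L SchwartzMap.fderivCLM ℝ _ F)

theorem parts {k : EE m → ℝ} (hk : HasTemperateGrowth k)
    (f : SchwartzMap (Fin m → ℝ) F) (y : Fin m → ℝ) (i : Fin m) :
    Iop (Dv (dX i) k) f y = - Iop k (((SchwartzMap.evalCLM ℝ (Fin m → ℝ) F (Pi.single i 1)) ∘L
      SchwartzMap.fderivCLM ℝ _ F) f) y := by
  have hd : ∀ x, HasFDerivAt (fun x : Fin m → ℝ => k (x, y))
      ((fderiv ℝ k (x, y)).comp (ContinuousLinearMap.inl ℝ _ _)) x := by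
    intro x
    have h2 : HasFDerivAt (fun z : Fin m → ℝ => ((z, y) : EE m))
        (ContinuousLinearMap.inl ℝ _ _) x := by
      simpa using hasFDerivAt_prodMk_left x y
    exact (tg_diff hk (x, y)).hasFDerivAt.comp x h2
  have e : ∀ x, fderiv ℝ (fun x : Fin m → ℝ => k (x, y)) x (Pi.single i 1) = Dv (dX i) k (x, y) := by
    intro x; rw [(hd x).fderiv]; simp [Dv, dX]
  have := integral_smul_fderiv_eq_neg_fderiv_smul_of_integrable (μ := volume) (𝕜 := ℝ)
    (f := fun x : Fin m → ℝ => k (x, y)) (g := f) (v := Pi.single i 1)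
    (by simp only [e]; exact Iop_integrable (tg_Dv hk _) f y)
    (Iop_integrable hk (((SchwartzMap.evalCLM ℝ (Fin m → ℝ) F (Pi.single i 1)) ∘L
      SchwartzMap.fderivCLM ℝ _ F) f) y)
    (Iop_integrable hk f y) (fun x _ => (hd x).differentiableAt)
    (fun x _ => f.differentiableAt)
  simp only [e] at this
  have h3 := congrArg Neg.neg this
  rw [neg_neg] at h3
  exact h3.symm

theorem Iop_recursion {k : EE m → ℝ} (hk : HasTemperateGrowth k)
    (f : SchwartzMap (Fin m → ℝ) F) (y : Fin m → ℝ) :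
    (1 + ∑ i, y i ^ 2) • Iop k f y = Iop (Lop k) f y + Iop k (Rop f) y := by
  let P : Fin m → SchwartzMap (Fin m → ℝ) F →L[ℝ] SchwartzMap (Fin m → ℝ) F := fun i =>
    (SchwartzMap.evalCLM ℝ (Fin m → ℝ) F (Pi.single i 1)) ∘L SchwartzMap.fderivCLM ℝ _ F
  have h1 : Iop (Lop k) f y = ∑ i, Iop k (P i (P i f)) y + (∑ i, y i ^ 2) • Iop k f y := by
    have e : ∀ i, Iop k (P i (P i f)) y = Iop (Dv (dX i) (Dv (dX i) k)) f y := by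
      intro i
      rw [parts (tg_Dv hk _), parts hk, neg_neg]
    rw [Finset.sum_congr rfl fun i _ => e i]
    simp only [Iop]
    rw [← integral_smul, ← integral_finsetSum, ← integral_add]
    · congr 1; funext x
      simp only [Lop, qy, add_smul, Finset.sum_smul, smul_smul]
    · exact integrable_finsetSum _ fun i _ => Iop_integrable (tg_Dv (tg_Dv hk _) _) f y
    · exact (Iop_integrable hk f y).smul _
    · exact fun i _ => Iop_integrable (tg_Dv (tg_Dv hk _) _) f y
  have h2 : Iop k (Rop f) y = Iop k f y - ∑ i, Iop k (P i (P i f)) y := by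
    simp only [Iop]
    rw [← integral_finsetSum, ← integral_sub]
    · congr 1; funext x
      simp [Rop, P, smul_sub, Finset.smul_sum]
    · exact Iop_integrable hk f y
    · exact integrable_finsetSum _ fun i _ => Iop_integrable hk (P i (P i f)) y
    · exact fun i _ => Iop_integrable hk (P i (P i f)) y
  rw [h1, h2, add_smul, one_smul]
  abel

theorem Good.decay {k : EE m → ℝ} (hk : Good k) :
    ∃ N : ℕ, ∀ p : ℕ, ∃ q : Seminorm ℝ (SchwartzMap (Fin m → ℝ) F), Continuous q ∧
    ∀ (f : SchwartzMap (Fin m → ℝ) F) (y : Fin m → ℝ),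
      (1 + ∑ i, y i ^ 2) ^ p * ‖Iop k f y‖ ≤ (1 + ‖y‖) ^ N * q f := by
  induction hk with
  | zero =>
    refine ⟨0, fun p => ⟨0, continuous_const, fun f y => ?_⟩⟩
    simp [Iop]
  | step k hk hL ih =>
    obtain ⟨N1, h1⟩ := ih
    obtain ⟨N2, q2, hq2, h2⟩ := Iop_bound (F := F) hk
    refine ⟨N1 + N2, fun p => ?_⟩
    induction p with
    | zero =>
      refine ⟨q2, hq2, fun f y => ?_⟩
      rw [pow_zero, one_mul]
      refine (h2 f y).trans ?_
      gcongr
      · simp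
      · omega
    | succ p ihp =>
      obtain ⟨q3, hq3, h3⟩ := ihp
      obtain ⟨q1, hq1, h1⟩ := h1 p
      refine ⟨q1 + q3.comp (Rop : _ →L[ℝ] SchwartzMap (Fin m → ℝ) F).toLinearMap, ?_, fun f y => ?_⟩
      · exact hq1.add (hq3.comp (Rop : _ →L[ℝ] SchwartzMap (Fin m → ℝ) F).continuous)
      have e : (q1 + q3.comp (Rop : _ →L[ℝ] SchwartzMap (Fin m → ℝ) F).toLinearMap) f
        = q1 f + q3 (Rop f) := rfl
      have h0 : (0 : ℝ) ≤ 1 + ∑ i, y i ^ 2 := by positivity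
      have r := congrArg norm (Iop_recursion hk f y)
      rw [norm_smul, Real.norm_of_nonneg h0] at r
      rw [pow_succ, mul_assoc, r, e]
      have h1' : (1 + ∑ i, y i ^ 2) ^ p * ‖Iop (Lop k) f y‖ ≤ (1 + ‖y‖) ^ (N1 + N2) * q1 f := by
        refine (h1 f y).trans ?_
        gcongr
        · simp
        · omega
      calc _ ≤ (1 + ∑ i, y i ^ 2) ^ p * (‖Iop (Lop k) f y‖ + ‖Iop k (Rop f) y‖) := by
            gcongr; exact norm_add_le _ _
        _ = (1 + ∑ i, y i ^ 2) ^ p * ‖Iop (Lop k) f y‖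
            + (1 + ∑ i, y i ^ 2) ^ p * ‖Iop k (Rop f) y‖ := by ring
        _ ≤ (1 + ‖y‖) ^ (N1 + N2) * q1 f + (1 + ‖y‖) ^ (N1 + N2) * q3 (Rop f) :=
            add_le_add h1' (h3 _ y)
        _ = _ := by ring

theorem one_add_norm_le (y : Fin m → ℝ) : 1 + ‖y‖ ≤ 2 * (1 + ∑ i, y i ^ 2) := by
  have h0 : (0 : ℝ) ≤ ∑ i, y i ^ 2 := by positivity
  have h1 : ‖y‖ ≤ 1 + ∑ i, y i ^ 2 := by
    rw [pi_norm_le_iff_of_nonneg (by positivity)]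
    intro i
    have : y i ^ 2 ≤ ∑ i, y i ^ 2 :=
      Finset.single_le_sum (f := fun i => y i ^ 2) (fun j _ => by positivity) (Finset.mem_univ i)
    rw [Real.norm_eq_abs]
    nlinarith [sq_abs (y i), sq_nonneg (|y i| - 1)]
  linarith

theorem Good.decay' {k : EE m → ℝ} (hk : Good k) (p : ℕ) :
    ∃ q : Seminorm ℝ (SchwartzMap (Fin m → ℝ) F), Continuous q ∧
    ∀ (f : SchwartzMap (Fin m → ℝ) F) (y : Fin m → ℝ), (1 + ‖y‖) ^ p * ‖Iop k f y‖ ≤ q f := by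
  obtain ⟨N, h⟩ := hk.decay (F := F)
  obtain ⟨q, hq, h⟩ := h (N + p)
  let c : NNReal := 2 ^ (N + p)
  refine ⟨c • q, ?_, fun f y => ?_⟩
  · have : ⇑(c • q) = fun f => (c : ℝ) * q f := by funext f; rfl
    rw [this]; fun_prop
  have e : (c • q) f = 2 ^ (N + p) * q f := by
    change ((c : NNReal) : ℝ) * q f = _
    simp [c]
  have hp : (0 : ℝ) < (1 + ‖y‖) ^ N := by positivity
  rw [← mul_le_mul_iff_right₀ hp, e]
  calc _ = (1 + ‖y‖) ^ (N + p) * ‖Iop k f y‖ := by ring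
    _ ≤ (2 * (1 + ∑ i, y i ^ 2)) ^ (N + p) * ‖Iop k f y‖ := by
        gcongr; exact one_add_norm_le y
    _ = 2 ^ (N + p) * ((1 + ∑ i, y i ^ 2) ^ (N + p) * ‖Iop k f y‖) := by
        rw [mul_pow, mul_assoc]
    _ ≤ 2 ^ (N + p) * ((1 + ‖y‖) ^ N * q f) :=
        mul_le_mul_of_nonneg_left (h f y) (by positivity)
    _ = _ := by ring

theorem Good.decay_deriv [CompleteSpace F] (n : ℕ) {k : EE m → ℝ} (hk : Good k) (p : ℕ) :
    ∃ q : Seminorm ℝ (SchwartzMap (Fin m → ℝ) F), Continuous q ∧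
    ∀ (f : SchwartzMap (Fin m → ℝ) F) (y : Fin m → ℝ),
      (1 + ‖y‖) ^ p * ‖iteratedFDeriv ℝ n (Iop k f) y‖ ≤ q f := by
  induction n generalizing k with
  | zero => simpa using hk.decay' (F := F) p
  | succ n ih =>
    choose q hq h using fun i : Fin m => ih (hk.dy i)
    let c : Fin m → NNReal := fun i => ‖(Lam i : F →L[ℝ] _)‖₊
    refine ⟨∑ i, c i • q i, ?_, fun f y => ?_⟩
    · refine Seminorm.continuous_finsetSum fun i _ => ?_
      have : ⇑(c i • q i) = fun f => (c i : ℝ) * q i f := by funext f; rfl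
      rw [this]
      exact continuous_const.mul (hq i)
    have e : (∑ i, c i • q i) f = ∑ i, (c i : ℝ) * q i f := by
      rw [sum_apply]; rfl
    have hd : fderiv ℝ (Iop k f) = fun y => ∑ i, (Lam i ∘ Iop (Dv (dY i) k) f) y := by
      funext y; exact (Iop_hasFDerivAt hk.tg f y).fderiv
    have hc : ∀ i, ContDiff ℝ n (Iop (Dv (dY i) k) f) := fun i => Iop_contDiff n (tg_Dv hk.tg _) f
    have hc' : ∀ i, ContDiff ℝ n (Lam i ∘ Iop (Dv (dY i) k) f) := fun i =>
      (Lam (F := F) i).contDiff.comp (hc i)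
    have hn : ∀ i, ‖iteratedFDeriv ℝ n (Lam i ∘ Iop (Dv (dY i) k) f) y‖ ≤
        ‖(Lam i : F →L[ℝ] _)‖ * ‖iteratedFDeriv ℝ n (Iop (Dv (dY i) k) f) y‖ := fun i =>
      (Lam (F := F) i).norm_iteratedFDeriv_comp_left (hc i).contDiffAt le_rfl
    rw [e, ← norm_iteratedFDeriv_fderiv, hd, iteratedFDeriv_fun_sum_apply
      (fun i _ => (hc' i).contDiffAt)]
    calc _ ≤ (1 + ‖y‖) ^ p * ∑ i, ‖(Lam i : F →L[ℝ] _)‖ *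
          ‖iteratedFDeriv ℝ n (Iop (Dv (dY i) k) f) y‖ := by
          gcongr
          exact norm_sum_le_of_le _ fun i _ => hn i
      _ = ∑ i, (c i : ℝ) * ((1 + ‖y‖) ^ p * ‖iteratedFDeriv ℝ n (Iop (Dv (dY i) k) f) y‖) := by
          rw [Finset.mul_sum]
          refine Finset.sum_congr rfl fun i _ => ?_
          simp only [c, coe_nnnorm]; ring
      _ ≤ _ := by
          gcongr with i _
          exact h i f y

theorem Good.clm [CompleteSpace F] {k : EE m → ℝ} (hk : Good k) :
    ∃ T : SchwartzMap (Fin m → ℝ) F →L[ℝ] SchwartzMap (Fin m → ℝ) F,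
      ∀ f y, T f y = ∫ x, k (x, y) • f x := by
  refine ⟨SchwartzMap.mkCLM (𝕜 := ℝ) (fun f => Iop k f) ?_ ?_ ?_ ?_, fun f y => rfl⟩
  · intro f g y
    simp only [Iop, add_apply, smul_add]
    exact integral_add (Iop_integrable hk.tg f y) (Iop_integrable hk.tg g y)
  · intro a f y
    simp only [Iop, smul_apply, RingHom.id_apply]
    rw [← integral_smul]
    simp only [smul_smul, mul_comm]
  · intro f
    exact contDiff_infty.2 fun n => Iop_contDiff n hk.tg f
  · rintro ⟨p, n⟩
    obtain ⟨q, hq, h⟩ := hk.decay_deriv (F := F) n p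
    obtain ⟨s, C, hC, hb⟩ := Seminorm.bound_of_continuous
      (schwartz_withSeminorms ℝ (Fin m → ℝ) F) q hq
    refine ⟨s, C, C.2, fun f y => ?_⟩
    refine le_trans ?_ ((h f y).trans (hb f))
    dsimp only
    gcongr
    simp

/-- coefficients of the Bessel series in the variable `w = t^2` -/
def cb (a : ℝ) (j : ℕ) : ℝ :=
  (-1/4 : ℝ)^j / (j.factorial * Real.Gamma ((j : ℝ) + a + 1) * (2:ℝ)^a)

def phi (a w : ℝ) : ℝ := ∑' j : ℕ, cb a j * w ^ j

theorem besselJt_eq (a t : ℝ) : besselJt a t = phi a (t ^ 2) := by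
  unfold besselJt phi cb
  refine tsum_congr fun j => ?_
  have : (-1 : ℝ)^j * (t/2) ^ (2*j) = (-1/4 : ℝ)^j * (t^2)^j := by
    rw [pow_mul, ← mul_pow, ← mul_pow]; congr 1; ring
  rw [this]; ring

theorem cb_bound {a : ℝ} (ha : -1/2 ≤ a) :
    ∃ C, 0 ≤ C ∧ ∀ j, |cb a j| ≤ C * ((1/2 : ℝ)^j / j.factorial) := by
  have hG0 : 0 < Real.Gamma (a + 1) := Real.Gamma_pos_of_pos (by linarith)
  have h2 : 0 < (2:ℝ)^a := by positivity
  have hG : ∀ j : ℕ, (1/2 : ℝ)^j * Real.Gamma (a+1) ≤ Real.Gamma ((j:ℝ) + a + 1) := by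
    intro j
    induction j with
    | zero => simp
    | succ j ih =>
      have hj : (0:ℝ) ≤ j := by positivity
      have : ((j+1 : ℕ) : ℝ) + a + 1 = ((j:ℝ) + a + 1) + 1 := by push_cast; ring
      rw [this, Real.Gamma_add_one (s := (j:ℝ) + a + 1) (by linarith)]
      have : (1/2 : ℝ) * ((1/2 : ℝ)^j * Real.Gamma (a+1)) ≤
          ((j:ℝ) + a + 1) * Real.Gamma ((j:ℝ) + a + 1) := by
        apply mul_le_mul (by linarith) ih (by positivity) (by linarith)
      rw [pow_succ]; linarith
  refine ⟨1 / (Real.Gamma (a+1) * 2^a), by positivity, fun j => ?_⟩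
  have hj : (0:ℝ) ≤ j := by positivity
  have hGj : 0 < Real.Gamma ((j:ℝ) + a + 1) := Real.Gamma_pos_of_pos (by linarith)
  have hf : (0:ℝ) < j.factorial := by positivity
  unfold cb
  rw [abs_div, abs_pow, abs_of_pos (show (0:ℝ) < j.factorial * Real.Gamma ((j:ℝ) + a + 1) * 2^a by positivity)]
  have : |(-1/4 : ℝ)| = 1/2 * (1/2) := by rw [abs_of_neg (by norm_num)]; norm_num
  rw [this, mul_pow, div_mul_div_comm, one_mul, div_le_div_iff₀ (by positivity) (by positivity)]
  have h := hG j
  calc (1/2:ℝ)^j * (1/2)^j * (Real.Gamma (a+1) * 2^a * j.factorial)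
      = ((1/2:ℝ)^j * j.factorial * 2^a) * ((1/2)^j * Real.Gamma (a+1)) := by ring
    _ ≤ ((1/2:ℝ)^j * j.factorial * 2^a) * Real.Gamma ((j:ℝ) + a + 1) := by gcongr
    _ = _ := by ring

theorem cb_summable_abs {a : ℝ} (ha : -1/2 ≤ a) (R : ℝ) : Summable fun j => |cb a j| * |R| ^ j := by
  obtain ⟨C, hC, h⟩ := cb_bound ha
  have := (Real.summable_pow_div_factorial (1/2 * |R|)).mul_left C
  refine Summable.of_nonneg_of_le (fun j => by positivity) (fun j => ?_) this
  calc |cb a j| * |R|^j ≤ C * ((1/2 : ℝ)^j / j.factorial) * |R|^j := by gcongr; exact h j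
    _ = _ := by rw [mul_pow]; ring

theorem cb_summable {a : ℝ} (ha : -1/2 ≤ a) (w : ℝ) : Summable fun j => cb a j * w ^ j := by
  refine Summable.of_norm ?_
  simpa [Real.norm_eq_abs, abs_mul, abs_pow] using cb_summable_abs ha w

theorem cb_succ (a : ℝ) (j : ℕ) : ((j + 1 : ℕ) : ℝ) * cb a (j+1) = -(1/2) * cb (a+1) j := by
  unfold cb
  have e1 : ((j+1 : ℕ) : ℝ) + a + 1 = (j:ℝ) + (a + 1) + 1 := by push_cast; ring
  have hj : ((j:ℝ) + 1) ≠ 0 := by positivity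
  have hf : (j.factorial : ℝ) ≠ 0 := by positivity
  rw [e1, Real.rpow_add_one (by norm_num), Nat.factorial_succ, pow_succ]
  push_cast
  have h2 : (2:ℝ)^a ≠ 0 := by positivity
  by_cases hG : Real.Gamma ((j:ℝ) + (a+1) + 1) = 0
  · simp [hG]
  field_simp
  norm_num

theorem phi_hasDerivAt {a : ℝ} (ha : -1/2 ≤ a) (w : ℝ) :
    HasDerivAt (phi a) (-(1/2) * phi (a+1) w) w := by
  have ha1 : -1/2 ≤ a + 1 := by linarith
  set R : ℝ := |w| + 1
  have hR : 0 ≤ R := by positivity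
  let u : ℕ → ℝ := fun j => |(j:ℝ) * cb a j| * R ^ (j-1)
  have hu : Summable u := by
    rw [← summable_nat_add_iff 1]
    have := (cb_summable_abs ha1 R).mul_left (1/2)
    refine this.congr fun j => ?_
    simp only [u, Nat.add_sub_cancel]
    rw [cb_succ, abs_mul, abs_of_nonneg hR, abs_neg, abs_of_pos (by norm_num : (0:ℝ) < 1/2)]; ring
  have key := hasDerivAt_tsum_of_isPreconnected (𝕜 := ℝ) (F := ℝ) (u := u)
    (g := fun j z => cb a j * z ^ j) (g' := fun j z => cb a j * ((j:ℝ) * z ^ (j-1)))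
    (t := Metric.ball 0 R) (y₀ := w) (y := w) hu Metric.isOpen_ball
    (convex_ball (0:ℝ) R).isPreconnected
    (fun j z _ => by simpa using (hasDerivAt_pow j z).const_mul (cb a j))
    (fun j z hz => by
      have hz' : |z| ≤ R := by
        have := mem_ball_zero_iff.1 hz
        rw [Real.norm_eq_abs] at this; exact this.le
      simp only [u, Real.norm_eq_abs, abs_mul, abs_pow]
      calc |cb a j| * (|(j:ℝ)| * |z|^(j-1)) = |(j:ℝ)| * |cb a j| * |z|^(j-1) := by ring
        _ ≤ _ := by gcongr)
    (by simp [R]) (cb_summable ha w) (by simp [R])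
  have hs : Summable (fun j => cb a j * ((j:ℝ) * w ^ (j-1))) := by
    refine Summable.of_norm_bounded hu fun j => ?_
    simp only [u, Real.norm_eq_abs, abs_mul, abs_pow]
    calc |cb a j| * (|(j:ℝ)| * |w|^(j-1)) = |(j:ℝ)| * |cb a j| * |w|^(j-1) := by ring
      _ ≤ _ := by gcongr; simp [R]
  rw [hs.tsum_eq_zero_add] at key
  convert! key using 1
  simp only [Nat.cast_zero, zero_mul, mul_zero, zero_add, phi, Nat.add_sub_cancel]
  rw [← tsum_mul_left]
  refine tsum_congr fun j => ?_
  rw [← mul_assoc, ← cb_succ]; ring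

theorem cb_rec {a : ℝ} (ha : -1/2 ≤ a) (j : ℕ) :
    cb (a+2) j = 2*(a+1) * cb (a+1) (j+1) - cb a (j+1) := by
  have hj : (0:ℝ) ≤ j := by positivity
  have hG : 0 < Real.Gamma ((j:ℝ) + a + 2) := Real.Gamma_pos_of_pos (by linarith)
  unfold cb
  have e1 : (j:ℝ) + (a + 2) + 1 = ((j:ℝ) + a + 2) + 1 := by ring
  have e2 : ((j+1 : ℕ) : ℝ) + (a + 1) + 1 = ((j:ℝ) + a + 2) + 1 := by push_cast; ring
  have e3 : ((j+1 : ℕ) : ℝ) + a + 1 = ((j:ℝ) + a + 2) := by push_cast; ring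
  have hf : (j.factorial : ℝ) ≠ 0 := by positivity
  have h2 : (2:ℝ)^a ≠ 0 := by positivity
  have h3 : (j:ℝ) + a + 2 ≠ 0 := by linarith
  have h4 : (j:ℝ) + 1 ≠ 0 := by positivity
  rw [e1, e2, e3, Real.Gamma_add_one h3, show a + 2 = a + 1 + 1 by ring,
    Real.rpow_add_one (by norm_num), Real.rpow_add_one (by norm_num), Nat.factorial_succ, pow_succ]
  push_cast
  field_simp
  ring

theorem phi_rec {a : ℝ} (ha : -1/2 ≤ a) (w : ℝ) :
    w * phi (a+2) w = 2*(a+1) * phi (a+1) w - phi a w := by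
  have h0 := cb_summable ha w
  have h1 := cb_summable (a := a+1) (by linarith) w
  have h2 := cb_summable (a := a+2) (by linarith) w
  unfold phi
  rw [← tsum_mul_left, ← tsum_mul_left, ← (h1.mul_left _).tsum_sub h0,
    ((h1.mul_left _).sub h0).tsum_eq_zero_add]
  have : 2 * (a+1) * (cb (a+1) 0 * w^0) - cb a 0 * w^0 = 0 := by
    unfold cb
    have hG : 0 < Real.Gamma (a + 1) := Real.Gamma_pos_of_pos (by linarith)
    have ha' : a + 1 ≠ 0 := by linarith
    have h2 : (2:ℝ)^a ≠ 0 := by positivity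
    simp only [Nat.cast_zero, zero_add, pow_zero, Nat.factorial_zero, Nat.cast_one]
    rw [Real.Gamma_add_one ha', Real.rpow_add_one (by norm_num)]
    field_simp
    ring
  rw [this, zero_add]
  refine tsum_congr fun j => ?_
  rw [cb_rec ha]; ring

theorem phi_bound {a : ℝ} (ha : -1/2 ≤ a) {w : ℝ} (hw : 0 ≤ w) : |phi a w| ≤ |phi a 0| := by
  let E : ℝ → ℝ := fun w => phi a w ^ 2 + w * phi (a+1) w ^ 2
  have hE : ∀ w, HasDerivAt E (-(2*a+1) * phi (a+1) w ^ 2) w := by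
    intro w
    have h0 := phi_hasDerivAt ha w
    have h1 := phi_hasDerivAt (a := a+1) (by linarith) w
    have := (h0.pow 2).add ((hasDerivAt_id w).mul (h1.pow 2))
    have hr := phi_rec ha w
    rw [show a + 1 + 1 = a + 2 by ring] at this
    convert! this using 1
    simp
    linear_combination (phi (a+1) w) * hr
  have hanti : Antitone E := by
    refine antitone_of_hasDerivAt_nonpos hE fun x => ?_
    simp only [Pi.zero_apply]
    nlinarith [sq_nonneg (phi (a+1) x)]
  have h := hanti hw
  simp only [E] at h
  apply sq_le_sq.1
  nlinarith [sq_nonneg (phi (a+1) w), mul_nonneg hw (sq_nonneg (phi (a+1) w))]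

theorem phi_contDiff (n : ℕ) {a : ℝ} (ha : -1/2 ≤ a) : ContDiff ℝ n (phi a) := by
  induction n generalizing a with
  | zero =>
    simp only [Nat.cast_zero, contDiff_zero]
    exact continuous_iff_continuousAt.2 fun w => (phi_hasDerivAt ha w).continuousAt
  | succ n ih =>
    push_cast
    rw [contDiff_succ_iff_deriv]
    refine ⟨fun w => (phi_hasDerivAt ha w).differentiableAt, by simp, ?_⟩
    rw [show deriv (phi a) = fun w => -(1/2) * phi (a+1) w from
      funext fun w => (phi_hasDerivAt ha w).deriv]
    exact contDiff_const.mul (ih (by linarith))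

theorem phi_iteratedDeriv (n : ℕ) {a : ℝ} (ha : -1/2 ≤ a) :
    iteratedDeriv n (phi a) = fun w => (-(1/2))^n * phi (a+n) w := by
  induction n with
  | zero => simp
  | succ n ih =>
    rw [iteratedDeriv_succ, ih]
    funext w
    have hn : (0:ℝ) ≤ n := by positivity
    rw [((phi_hasDerivAt (a := a + n) (by linarith) w).const_mul _).deriv, pow_succ]
    push_cast
    rw [add_assoc]; ring

theorem phi_comp_tg {a : ℝ} (ha : -1/2 ≤ a) {w : EE m → ℝ} (hw : HasTemperateGrowth w)
    (h0 : ∀ z, 0 ≤ w z) : HasTemperateGrowth (fun z => phi a (w z)) := by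
  have hc : ContDiff ℝ ((⊤ : ℕ∞) : WithTop ℕ∞) (phi a) := contDiff_infty.2 fun n => phi_contDiff n ha
  refine HasTemperateGrowth.comp' (g := phi a) (t := Set.Ici 0) ?_ (uniqueDiffOn_Ici 0)
    hc.contDiffOn ?_ hw
  · rintro _ ⟨z, rfl⟩; exact h0 z
  · intro N
    refine ⟨0, ∑ n ∈ Finset.range (N+1), |phi (a+n) 0|, by positivity, fun n hn x hx => ?_⟩
    have hnn : (0:ℝ) ≤ n := by positivity
    rw [norm_iteratedFDerivWithin_eq_norm_iteratedDerivWithin,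
      iteratedDerivWithin_eq_iteratedDeriv (uniqueDiffOn_Ici 0) (phi_contDiff n ha).contDiffAt hx,
      phi_iteratedDeriv n ha, pow_zero, mul_one, Real.norm_eq_abs, abs_mul, abs_pow, abs_neg,
      abs_of_pos (by norm_num : (0:ℝ) < 1/2)]
    have h1 : |phi (a+n) x| ≤ |phi (a+n) 0| := phi_bound (by linarith) hx
    have h2 : |phi (a+n) 0| ≤ ∑ n ∈ Finset.range (N+1), |phi (a+n) 0| :=
      Finset.single_le_sum (f := fun n : ℕ => |phi (a+n) 0|) (fun i _ => abs_nonneg _)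
        (Finset.mem_range.2 (by omega))
    have h3 : ((1:ℝ)/2)^n ≤ 1 := pow_le_one₀ (by norm_num) (by norm_num)
    calc ((1:ℝ)/2)^n * |phi (a+n) x| ≤ 1 * |phi (a+n) x| := by gcongr
      _ ≤ _ := by linarith

theorem tg_cos : HasTemperateGrowth Real.cos := by
  refine ⟨Real.contDiff_cos, fun n => ⟨0, 1, fun x => ?_⟩⟩
  rw [norm_iteratedFDeriv_eq_norm_iteratedDeriv]
  simpa using Real.abs_iteratedDeriv_cos_le_one n x

theorem tg_sin : HasTemperateGrowth Real.sin := by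
  refine ⟨Real.contDiff_sin, fun n => ⟨0, 1, fun x => ?_⟩⟩
  rw [norm_iteratedFDeriv_eq_norm_iteratedDeriv]
  simpa using Real.abs_iteratedDeriv_sin_le_one n x

/-- `k` is temperate with partial derivative `k'` in the direction `x_i` -/
def DD (i : Fin m) (k k' : EE m → ℝ) : Prop :=
  HasTemperateGrowth k ∧ Dv (dX i) k = k'

theorem DD.add {i : Fin m} {k k' l l' : EE m → ℝ} (h : DD i k k') (h' : DD i l l') :
    DD i (fun z => k z + l z) (fun z => k' z + l' z) :=
  ⟨h.1.fun_add h'.1, by rw [Dv_add h.1 h'.1, h.2, h'.2]⟩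

theorem DD.mul {i : Fin m} {k k' l l' : EE m → ℝ} (h : DD i k k') (h' : DD i l l') :
    DD i (fun z => k z * l z) (fun z => k z * l' z + l z * k' z) :=
  ⟨h.1.fun_mul h'.1, by rw [Dv_mul h.1 h'.1, h.2, h'.2]⟩

theorem DD.const (i : Fin m) (c : ℝ) : DD i (fun _ => c) (fun _ => 0) :=
  ⟨by fun_prop, Dv_const _ _⟩

theorem DD.sum {ι : Type*} (s : Finset ι) {i : Fin m} {k k' : ι → EE m → ℝ}
    (h : ∀ j, DD i (k j) (k' j)) :
    DD i (fun z => ∑ j ∈ s, k j z) (fun z => ∑ j ∈ s, k' j z) :=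
  ⟨by have := fun j => (h j).1; fun_prop, by
    rw [Dv_sum _ (fun j => (h j).1)]; funext z
    exact Finset.sum_congr rfl fun j _ => by rw [(h j).2]⟩

theorem DD.pow {i : Fin m} {k k' : EE m → ℝ} (h : DD i k k') (n : ℕ) :
    DD i (fun z => k z ^ n) (fun z => n * k z ^ (n-1) * k' z) :=
  ⟨by have := h.1; fun_prop, by rw [Dv_pow h.1, h.2]⟩

theorem DD.congr {i : Fin m} {k k' l' : EE m → ℝ} (h : DD i k k') (e : ∀ z, k' z = l' z) :
    DD i k l' := ⟨h.1, h.2.trans (funext e)⟩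

theorem DD.x (i j : Fin m) : DD i (fun z => z.1 j) (fun _ => if j = i then 1 else 0) :=
  ⟨tg_x j, by rw [Dv_x]; funext z; simp [dX, Pi.single_apply]⟩

theorem DD.y (i j : Fin m) : DD i (fun z => z.2 j) (fun _ => 0) :=
  ⟨tg_y j, by rw [Dv_y]; funext z; simp [dX]⟩

theorem DD.qy (i : Fin m) : DD i qy (fun _ => 0) :=
  ⟨tg_qy, by rw [Dv_qy]; funext z; simp [dX]⟩

def sf (z : EE m) : ℝ := ∑ i, z.1 i * z.2 i
def wf (z : EE m) : ℝ := (∑ i, z.1 i * z.1 i) * (∑ i, z.2 i * z.2 i) - sf z ^ 2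
def gf (i : Fin m) (z : EE m) : ℝ := qy z * z.1 i - sf z * z.2 i

theorem qy_eq (z : EE m) : qy z = ∑ i, z.2 i * z.2 i := by
  unfold qy; exact Finset.sum_congr rfl fun i _ => by ring

theorem DD.sf (i : Fin m) : DD i sf (fun z => z.2 i) := by
  have := DD.sum Finset.univ (fun j => (DD.x i j).mul (DD.y i j))
  exact this.congr fun z => by simp

theorem DD.wf (i : Fin m) : DD i wf (fun z => 2 * gf i z) := by
  have h1 := DD.sum Finset.univ (fun j => (DD.x i j).mul (DD.x i j))
  have h := (h1.mul (DD.qy i)).add (((DD.sf i).pow 2).mul (DD.const i (-1)))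
  have e : (CliffordFourier.wf : EE m → ℝ) = fun z => (∑ i, z.1 i * z.1 i) * CliffordFourier.qy z
      + CliffordFourier.sf z ^ 2 * (-1) := by
    funext z; rw [CliffordFourier.wf, qy_eq]; ring
  rw [e]
  refine h.congr fun z => ?_
  simp [gf, Finset.sum_add_distrib]
  ring

theorem DD.gf (i : Fin m) : DD i (gf i) (fun z => CliffordFourier.qy z - z.2 i ^ 2) := by
  have h := ((DD.qy i).mul (DD.x i i)).add (((DD.sf i).mul (DD.y i i)).mul (DD.const i (-1)))
  have e : (CliffordFourier.gf i : EE m → ℝ) = fun z => CliffordFourier.qy z * z.1 i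
      + CliffordFourier.sf z * z.2 i * (-1) := by
    funext z; rw [CliffordFourier.gf]; ring
  rw [e]
  refine h.congr fun z => ?_
  simp
  ring

theorem sum_gf_y (z : EE m) : ∑ i, z.2 i * gf i z = 0 := by
  have : ∀ i, z.2 i * gf i z = qy z * (z.1 i * z.2 i) - sf z * (z.2 i * z.2 i) := fun i => by
    rw [gf]; ring
  simp only [this, Finset.sum_sub_distrib, ← Finset.mul_sum, ← qy_eq]
  rw [← sf]; ring

theorem sum_gf_sq (z : EE m) : ∑ i, gf i z ^ 2 = qy z * wf z := by
  have : ∀ i, gf i z ^ 2 = qy z ^ 2 * (z.1 i * z.1 i) - sf z * qy z * (z.1 i * z.2 i)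
      - sf z * (z.2 i * gf i z) := fun i => by
    rw [gf]; ring
  simp only [this, Finset.sum_sub_distrib, ← Finset.mul_sum, sum_gf_y]
  rw [← sf, wf, ← qy_eq]; ring

theorem wf_nonneg (z : EE m) : 0 ≤ wf z := by
  have := Finset.sum_mul_sq_le_sq_mul_sq Finset.univ z.1 z.2
  simp only [wf, sf]
  simp only [sq] at this ⊢
  linarith

theorem DD.phi {a : ℝ} (ha : -1/2 ≤ a) (i : Fin m) :
    DD i (fun z => CliffordFourier.phi a (CliffordFourier.wf z)) (fun z => -(CliffordFourier.phi (a+1) (CliffordFourier.wf z) *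
      CliffordFourier.gf i z)) := by
  refine ⟨phi_comp_tg ha (DD.wf i).1 wf_nonneg, ?_⟩
  funext z
  have h1 := ((tg_diff (DD.wf i).1 z).hasFDerivAt)
  have h2 := (phi_hasDerivAt ha (CliffordFourier.wf z)).comp_hasFDerivAt z h1
  have h3 := congrFun (DD.wf i).2 z
  simp only [Dv] at h3 ⊢
  have e : (fun z => CliffordFourier.phi a (CliffordFourier.wf z)) =
    CliffordFourier.phi a ∘ (CliffordFourier.wf : EE m → ℝ) := rfl
  rw [e, h2.fderiv]
  simp [h3]
  ring

theorem Lop_eq {a c : ℝ} (ha : -1/2 ≤ a) (k : ℕ) {h : EE m → ℝ} {hi : Fin m → EE m → ℝ}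
    (h1 : ∀ i, DD i h (hi i)) (h2 : ∀ i, DD i (hi i) (fun _ => 0))
    (h3 : ∀ z, ∑ i, hi i z * z.2 i = 0) (h4 : ∀ z, ∑ i, hi i z * gf i z = c * qy z * h z) (z : EE m) :
    Lop (fun z => h z * sf z ^ k * phi a (wf z)) z =
      k * ((k-1 : ℕ) : ℝ) * (qy z * (h z * sf z ^ (k-1-1) * phi a (wf z)))
      + (2*a+3-m-2*c) * (qy z * (h z * sf z ^ k * phi (a+1) (wf z))) := by
  have ha1 : -1/2 ≤ a + 1 := by linarith
  have D1 : ∀ i, DD i (fun z => h z * sf z ^ k * phi a (wf z))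
      (fun z => hi i z * sf z ^ k * phi a (wf z) +
        h z * (k * sf z ^ (k-1) * z.2 i) * phi a (wf z)
        + (-1) * (h z * sf z ^ k * (phi (a+1) (wf z) * gf i z))) := fun i =>
    (((h1 i).mul ((DD.sf i).pow k)).mul (DD.phi ha i)).congr fun z => by ring
  have D2 : ∀ i, DD i (fun z => hi i z * sf z ^ k * phi a (wf z) +
        h z * (k * sf z ^ (k-1) * z.2 i) * phi a (wf z)
        + (-1) * (h z * sf z ^ k * (phi (a+1) (wf z) * gf i z))) 
      (fun z => 2 * (k * sf z ^ (k-1)) * phi a (wf z) * (hi i z * z.2 i)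
        - 2 * sf z ^ k * phi (a+1) (wf z) * (hi i z * gf i z)
        + h z * (k * ((k-1:ℕ) * sf z ^ (k-1-1))) * phi a (wf z) * (z.2 i ^ 2)
        - 2 * h z * (k * sf z ^ (k-1)) * phi (a+1) (wf z) * (z.2 i * gf i z)
        - h z * sf z ^ k * phi (a+1) (wf z) * (qy z - z.2 i ^ 2)
        + h z * sf z ^ k * phi (a+1+1) (wf z) * (gf i z ^ 2)) := fun i =>
    (((((h2 i).mul ((DD.sf i).pow k)).mul (DD.phi ha i)).add
      (((h1 i).mul (((DD.const i k).mul ((DD.sf i).pow (k-1))).mul (DD.y i i))).mul (DD.phi ha i))).add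
      ((DD.const i (-1)).mul (((h1 i).mul ((DD.sf i).pow k)).mul ((DD.phi ha1 i).mul (DD.gf i))))).congr
      fun z => by ring
  have hr := phi_rec ha (wf z)
  have hq : ∑ i : Fin m, z.2 i ^ 2 = qy z := rfl
  simp only [Lop, (D1 _).2, (D2 _).2]
  simp only [Finset.sum_add_distrib, Finset.sum_sub_distrib, ← Finset.mul_sum, h3, h4, sum_gf_y,
    sum_gf_sq, hq, Finset.sum_const, Finset.card_univ, Fintype.card_fin, nsmul_eq_mul,
    show a + 1 + 1 = a + 2 by ring]
  linear_combination h z * sf z ^ k * qy z * hr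

theorem Good.main {c : ℝ} {h : EE m → ℝ} {hi : Fin m → EE m → ℝ}
    (h1 : ∀ i, DD i h (hi i)) (h2 : ∀ i, DD i (hi i) (fun _ => 0))
    (h3 : ∀ z, ∑ i, hi i z * z.2 i = 0) (h4 : ∀ z, ∑ i, hi i z * gf i z = c * qy z * h z)
    (hm : 0 < m) (l : ℕ) : ∀ (k : ℕ) (a : ℝ), -1/2 ≤ a → a = (m + 2*c - 2*l - 3)/2 →
      Good (fun z => h z * sf z ^ k * phi a (wf z)) := by
  have i0 : Fin m := ⟨0, hm⟩
  induction l with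
  | zero =>
    intro k
    induction k using Nat.strong_induction_on with
    | _ k ih =>
      intro a ha hae
      have htg : HasTemperateGrowth (fun z => h z * sf z ^ k * phi a (wf z)) :=
        (((h1 i0).mul ((DD.sf i0).pow k)).mul (DD.phi ha i0)).1
      refine Good.step _ htg ?_
      rw [show Lop _ = _ from funext (Lop_eq ha k h1 h2 h3 h4)]
      have hz : 2*a+3-m-2*c = 0 := by rw [hae]; push_cast; ring
      simp only [hz, zero_mul, add_zero]
      rcases k with _ | k
      · simpa using Good.zero
      · exact ((ih (k+1-1-1) (by omega) a ha hae).qy_mul).const_mul _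
  | succ l ihl =>
    intro k
    induction k using Nat.strong_induction_on with
    | _ k ih =>
      intro a ha hae
      have htg : HasTemperateGrowth (fun z => h z * sf z ^ k * phi a (wf z)) :=
        (((h1 i0).mul ((DD.sf i0).pow k)).mul (DD.phi ha i0)).1
      refine Good.step _ htg ?_
      rw [show Lop _ = _ from funext (Lop_eq ha k h1 h2 h3 h4)]
      have g2 := ((ihl k (a+1) (by linarith) (by rw [hae]; push_cast; ring)).qy_mul).const_mul
        (2*a+3-m-2*c)
      rcases k with _ | k
      · simpa using g2
      · exact Good.add (((ih (k+1-1-1) (by omega) a ha hae).qy_mul).const_mul _) g2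

theorem Good.scalar (hm : 0 < m) (l k : ℕ) (hl : 2 * l + 2 ≤ m) :
    Good (fun z : EE m => sf z ^ k * phi (((m:ℝ) - 2*l - 3)/2) (wf z)) := by
  have hl' : (2:ℝ) * l + 2 ≤ m := by exact_mod_cast hl
  have := Good.main (m := m) (c := 0) (h := fun _ => 1) (hi := fun _ _ => 0)
    (fun i => DD.const i 1) (fun i => DD.const i 0) (by simp) (by simp) hm l k _
    (by linarith) rfl
  simpa using this

/-- the components of `x ∧ y` -/
def Wf (p q : Fin m) (z : EE m) : ℝ := z.1 p * z.2 q - z.1 q * z.2 p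

theorem Good.wedge (hm : 0 < m) (l k : ℕ) (hl : 2 * l ≤ m) (p q : Fin m) :
    Good (fun z : EE m => Wf p q z * sf z ^ k * phi (((m:ℝ) - 2*l - 1)/2) (wf z)) := by
  have hl' : (2:ℝ) * l ≤ m := by exact_mod_cast hl
  refine Good.main (m := m) (c := 1) (h := Wf p q)
    (hi := fun i z => (if p = i then 1 else 0) * z.2 q - (if q = i then 1 else 0) * z.2 p)
    (fun i => ?_) (fun i => ?_) ?_ ?_ hm l k _ (by linarith) (by ring)
  · have := ((DD.x i p).mul (DD.y i q)).add (((DD.x i q).mul (DD.y i p)).mul (DD.const i (-1)))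
    have e : (Wf p q : EE m → ℝ) = fun z => z.1 p * z.2 q + z.1 q * z.2 p * (-1) := by
      funext z; rw [Wf]; ring
    rw [e]
    refine this.congr fun z => by ring
  · have := ((DD.const i (if p = i then 1 else 0)).mul (DD.y i q)).add
      ((DD.const i (-(if q = i then 1 else 0))).mul (DD.y i p))
    have e : (fun z : EE m => (if p = i then (1:ℝ) else 0) * z.2 q - (if q = i then 1 else 0) * z.2 p)
      = fun z => (if p = i then (1:ℝ) else 0) * z.2 q + -(if q = i then (1:ℝ) else 0) * z.2 p := by
      funext z; ring
    rw [e]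
    refine this.congr fun z => by ring
  · intro z
    simp [sub_mul, Finset.sum_sub_distrib, mul_comm]
  · intro z
    simp [sub_mul, Finset.sum_sub_distrib, gf, Wf]
    ring

theorem DD.comp {i : Fin m} {u u' : EE m → ℝ} (hu : DD i u u') {f f' : ℝ → ℝ}
    (hf : HasTemperateGrowth f) (h : ∀ x, HasDerivAt f (f' x) x) :
    DD i (fun z => f (u z)) (fun z => f' (u z) * u' z) := by
  refine ⟨hf.comp hu.1, ?_⟩
  funext z
  have h2 := (h (u z)).comp_hasFDerivAt z (tg_diff hu.1 z).hasFDerivAt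
  have h3 := congrFun hu.2 z
  simp only [Dv] at h3 ⊢
  have e : (fun z => f (u z)) = f ∘ u := rfl
  rw [e, h2.fderiv]
  simp [h3]

def uf (z : EE 2) : ℝ := Wf 0 1 z

theorem DD.uf (i : Fin 2) : DD i uf (fun z => if i = 0 then z.2 1 else - z.2 0) := by
  have := ((DD.x i 0).mul (DD.y i 1)).add (((DD.x i 1).mul (DD.y i 0)).mul (DD.const i (-1)))
  have e : CliffordFourier.uf = fun z : EE 2 => z.1 0 * z.2 1 + z.1 1 * z.2 0 * (-1) := by
    funext z; rw [CliffordFourier.uf, Wf]; ring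
  rw [e]
  refine this.congr fun z => ?_
  fin_cases i <;> simp

theorem DD.uf' (i : Fin 2) : DD i (fun z => if i = 0 then z.2 1 else - z.2 0) (fun _ => 0) := by
  fin_cases i
  · simpa using DD.y 0 1
  · simpa using (DD.const 1 (-1)).mul (DD.y 1 0)

theorem Good.cos : Good (fun z : EE 2 => Real.cos (uf z)) := by
  have D1 := fun i => (DD.uf i).comp tg_cos Real.hasDerivAt_cos
  have htg : HasTemperateGrowth (fun x => - Real.sin x) := tg_sin.fun_neg
  have D2 := fun i => ((DD.uf i).comp htg (fun x => (Real.hasDerivAt_sin x).neg)).mul (DD.uf' i)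
  refine Good.step _ (D1 0).1 ?_
  convert Good.zero using 1
  funext z
  simp only [Lop, (D1 _).2, (D2 _).2, qy, Fin.sum_univ_two]
  simp
  ring

theorem Good.sin : Good (fun z : EE 2 => Real.sin (uf z)) := by
  have D1 := fun i => (DD.uf i).comp tg_sin Real.hasDerivAt_sin
  have D2 := fun i => ((DD.uf i).comp tg_cos Real.hasDerivAt_cos).mul (DD.uf' i)
  refine Good.step _ (D1 0).1 ?_
  convert Good.zero using 1
  funext z
  simp only [Lop, (D1 _).2, (D2 _).2, qy, Fin.sum_univ_two]
  simp
  ring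

theorem Cl.add_mul' (a b c : Cl m) : (a + b) * c = a * c + b * c := by
  funext S
  change (∑ T : Finset (Fin m), _ * (a T + b T) * _ : ℂ) = (∑ T : Finset (Fin m), _) + (∑ T : Finset (Fin m), _)
  rw [← Finset.sum_add_distrib]
  exact Finset.sum_congr rfl fun T _ => by simp only [coeff]; ring

theorem Cl.mul_add' (a b c : Cl m) : a * (b + c) = a * b + a * c := by
  funext S
  change (∑ T : Finset (Fin m), _ * _ * (b _ + c _) : ℂ) = (∑ T : Finset (Fin m), _) + (∑ T : Finset (Fin m), _)
  rw [← Finset.sum_add_distrib]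
  exact Finset.sum_congr rfl fun T _ => by simp only [coeff]; ring

theorem Cl.smul_mul' (r : ℝ) (a b : Cl m) : (r • a) * b = r • (a * b) := by
  funext S
  change (∑ T : Finset (Fin m), _ * (r • a T) * _ : ℂ) = r • (∑ T : Finset (Fin m), _)
  rw [Finset.smul_sum]
  exact Finset.sum_congr rfl fun T _ => by simp only [coeff, Complex.real_smul]; ring

theorem Cl.mul_smul' (r : ℝ) (a b : Cl m) : a * (r • b) = r • (a * b) := by
  funext S
  change (∑ T : Finset (Fin m), _ * _ * (r • b _) : ℂ) = r • (∑ T : Finset (Fin m), _)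
  rw [Finset.smul_sum]
  exact Finset.sum_congr rfl fun T _ => by simp only [coeff, Complex.real_smul]; ring

theorem Cl.ofReal_smul (r : ℝ) (a : Cl m) : (r : ℂ) • a = r • a := by
  funext S
  exact (Complex.real_smul (x := r) (z := a S)).symm

theorem Cl.zero_mul' (a : Cl m) : (0 : Cl m) * a = 0 := by
  have := Cl.smul_mul' 0 (0 : Cl m) a
  simpa using this

theorem Cl.finite : FiniteDimensional ℝ (Cl m) :=
  inferInstanceAs (FiniteDimensional ℝ (Finset (Fin m) → ℂ))

/-- left multiplication -/
def Lm (a : Cl m) : Cl m →L[ℝ] Cl m :=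
  haveI : FiniteDimensional ℝ (Cl m) := Cl.finite
  LinearMap.toContinuousLinearMap
    { toFun := fun b => a * b
      map_add' := Cl.mul_add' a
      map_smul' := fun r b => Cl.mul_smul' r a b }

theorem Lm_apply (a b : Cl m) : Lm a b = a * b := rfl

/-- kernels defining a continuous operator on the Schwartz space -/
def Adm (K : EE m → Cl m) : Prop :=
  (∀ (f : SchwartzMap (Fin m → ℝ) (Cl m)) (y : Fin m → ℝ), Integrable fun x => K (x, y) * f x) ∧
  ∃ T : SchwartzMap (Fin m → ℝ) (Cl m) →L[ℝ] SchwartzMap (Fin m → ℝ) (Cl m),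
    ∀ (f : SchwartzMap (Fin m → ℝ) (Cl m)) (y : Fin m → ℝ), T f y = ∫ x, K (x, y) * f x

theorem Adm.of_good {k : EE m → ℝ} (hk : Good k) (a : Cl m) : Adm (fun z => k z • a) := by
  have e : ∀ (f : SchwartzMap (Fin m → ℝ) (Cl m)) (x y : Fin m → ℝ), (k (x, y) • a) * f x =
      k (x, y) • (SchwartzMap.postcompCLM (𝕜 := ℝ) (Lm a) f) x := fun f x y => by
    rw [Cl.smul_mul', SchwartzMap.postcompCLM_apply]; rfl
  obtain ⟨T, hT⟩ := hk.clm (F := Cl m)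
  refine ⟨fun f y => ?_, T.comp (SchwartzMap.postcompCLM (𝕜 := ℝ) (Lm a)), fun f y => ?_⟩
  · simp only [e]
    exact Iop_integrable hk.tg _ y
  · simp only [e]
    exact hT _ y

theorem Adm.zero : Adm (fun _ : EE m => (0 : Cl m)) := by
  refine ⟨fun f y => ?_, 0, fun f y => ?_⟩
  · simp [Cl.zero_mul']
  · simp [Cl.zero_mul']

theorem Adm.add {K L : EE m → Cl m} (hK : Adm K) (hL : Adm L) : Adm (fun z => K z + L z) := by
  obtain ⟨iK, T, hT⟩ := hK
  obtain ⟨iL, U, hU⟩ := hL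
  refine ⟨fun f y => ?_, T + U, fun f y => ?_⟩
  · simp only [Cl.add_mul']; exact (iK f y).add (iL f y)
  · simp only [Cl.add_mul']
    rw [integral_add (iK f y) (iL f y), ← hT, ← hU]; rfl

theorem Adm.smul {K : EE m → Cl m} (hK : Adm K) (c : ℝ) : Adm (fun z => c • K z) := by
  obtain ⟨iK, T, hT⟩ := hK
  refine ⟨fun f y => ?_, c • T, fun f y => ?_⟩
  · simp only [Cl.smul_mul']; exact (iK f y).smul c
  · simp only [Cl.smul_mul']
    rw [integral_smul, ← hT]; rfl

theorem Adm.sum {ι : Type*} (s : Finset ι) {K : ι → EE m → Cl m} (hK : ∀ i, Adm (K i)) :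
    Adm (fun z => ∑ i ∈ s, K i z) := by
  classical
  induction s using Finset.induction_on with
  | empty => simpa using Adm.zero
  | insert a s ha ih =>
    simp only [Finset.sum_insert ha]
    exact (hK a).add ih

theorem ip_wf (z : EE m) : ip z.1 z.1 * ip z.2 z.2 - ip z.1 z.2 ^ 2 = wf z := rfl

theorem bessel_sqrt (a : ℝ) (z : EE m) : besselJt a (Real.sqrt (wf z)) = phi a (wf z) := by
  rw [besselJt_eq, Real.sq_sqrt (wf_nonneg z)]

theorem good_A (hm : 2 < m) : Good (fun z : EE m => Astar m (sf z) (Real.sqrt (wf z))) := by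
  unfold Astar
  refine Good.sum _ fun l hl => ?_
  have hl' := Finset.mem_range.1 hl
  have := (Good.scalar (m := m) (by omega) l (m/2 - 2 - 2*l) (by omega)).const_mul
    ((1 / ((2:ℝ)^l * (l.factorial : ℝ))) *
      (Real.Gamma ((m:ℝ)/2) / Real.Gamma ((m:ℝ)/2 - 2*l - 1)))
  convert this using 1
  funext z
  rw [bessel_sqrt]; ring

theorem good_B (hm : 2 < m) : Good (fun z : EE m => Bstar m (sf z) (Real.sqrt (wf z))) := by
  unfold Bstar
  simp only [← Finset.sum_neg_distrib]
  refine Good.sum _ fun l hl => ?_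
  have hl' := Finset.mem_range.1 hl
  have := (Good.scalar (m := m) (by omega) l (m/2 - 1 - 2*l) (by omega)).const_mul
    (-((1 / ((2:ℝ)^l * (l.factorial : ℝ))) *
      (Real.Gamma ((m:ℝ)/2) / Real.Gamma ((m:ℝ)/2 - 2*l))))
  convert this using 1
  funext z
  rw [bessel_sqrt]; ring

theorem good_C (hm : 2 < m) (p q : Fin m) :
    Good (fun z : EE m => Cstar m (sf z) (Real.sqrt (wf z)) * Wf p q z) := by
  unfold Cstar
  simp only [← Finset.sum_neg_distrib, Finset.sum_mul]
  refine Good.sum _ fun l hl => ?_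
  have hl' := Finset.mem_range.1 hl
  have := (Good.wedge (m := m) (by omega) l (m/2 - 1 - 2*l) (by omega) p q).const_mul
    (-((1 / ((2:ℝ)^l * (l.factorial : ℝ))) *
      (Real.Gamma ((m:ℝ)/2) / Real.Gamma ((m:ℝ)/2 - 2*l))))
  convert this using 1
  funext z
  rw [bessel_sqrt]; ring

theorem Adm.kcf (hme : Even m) (hm : 2 ≤ m) : Adm (fun z : EE m => Kcf m z.1 z.2) := by
  by_cases h : 2 < m
  · simp only [Kcf, if_pos h, ip_wf]
    refine Adm.smul (Adm.add (Adm.of_good ((good_A h).add (good_B h)) 1) ?_) _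
    simp only [CliffordFourier.wedge, Finset.smul_sum]
    refine Adm.sum _ fun j => Adm.sum _ fun k => ?_
    by_cases hjk : j < k
    · simp only [if_pos hjk, Cl.ofReal_smul, smul_smul]
      have := Adm.of_good (good_C h j k) (e m j * e m k)
      convert this using 3
      congr 1
    · simpa [if_neg hjk] using Adm.zero
  · obtain rfl : m = 2 := by omega
    have hu : ∀ z : EE 2, (∑ j : Fin 2, ∑ k : Fin 2,
        if j < k then z.1 j * z.2 k - z.1 k * z.2 j else 0) = uf z := fun z => by
      simp [Fin.sum_univ_two, uf, Wf]
    simp only [Kcf, if_neg h, hu]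
    exact (Adm.of_good Good.cos _).add (Adm.of_good Good.sin _)

end Aux

/-- For even `m`, the Clifford-Fourier transform
`F_- f(y) = (2π)^{-m/2} ∫_{ℝ^m} K_-(x,y) f(x) dx`
is a well-defined continuous linear operator of the Schwartz space of Clifford-algebra
valued functions to itself. -/
theorem clifford_fourier_continuous_schwartz (m : ℕ) (hme : Even m) (hm : 2 ≤ m) :
    ∃ T : SchwartzMap (Fin m → ℝ) (Cl m) →L[ℝ] SchwartzMap (Fin m → ℝ) (Cl m),
      ∀ (f : SchwartzMap (Fin m → ℝ) (Cl m)) (y : Fin m → ℝ),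
        T f y = ((2*Real.pi) ^ (-(m:ℝ)/2)) • ∫ x : Fin m → ℝ, Kcf m x y * f x := by
  obtain ⟨_, T, hT⟩ := (Adm.kcf hme hm).smul ((2*Real.pi) ^ (-(m:ℝ)/2))
  refine ⟨T, fun f y => ?_⟩
  rw [hT, ← integral_smul]
  simp only [Cl.smul_mul']

end CliffordFourier
end
end
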